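/- arXiv:1707.02314 — 3 statements merged into one kernel-verified Lean document; each statement's English description precedes it below -/
import Mathlib

section
/- Let a ∈ ℝ, let I_f be an interval with least element a, nonempty interior, and I_f ⊂ [a,∞), let m ∈ ℕ*, let α = (α₁,…,α_m) ∈ (0,1]^m, let q_a ∈ ℝ^m, and let f : ℝ^m × I_f → ℝ^m be a Carathéodory function such that f(0,·) is locally integrable on I_f and f is globally Lipschitz continuous in its first variable: for every compact subinterval [c,d] ⊂ I_f there exists L ≥ 0 with |f(x₂,t) − f(x₁,t)| ≤ L|x₂ − x₁| for all x₁, x₂ ∈ ℝ^m and almost every t ∈ [c,d]. Then the Riemann–Liouville Cauchy problem (D^{α_i}_{a+}[q_i] = f_i(q(·),·) a.e. on I_f, with I^{1−α_i}_{a+}[q_i](a) = (q_a)_i for each i) has a global solution on I_f, and any two global solutions are equal almost everywhere on I_f. -/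
open MeasureTheory Set

/-- Left Riemann–Liouville fractional integral of order `α` with base point `a`
(for `α = 0` it is the identity). -/
noncomputable def rlInt (a α : ℝ) (q : ℝ → ℝ) (t : ℝ) : ℝ :=
  if α = 0 then q t else (1 / Real.Gamma α) * ∫ τ in a..t, (t - τ) ^ (α - 1) * q τ

/-- `q` is locally integrable on the interval `I` with least element `a`. -/
def LocIntegrableOn (a : ℝ) (I : Set ℝ) (q : ℝ → ℝ) : Prop :=
  ∀ b ∈ I, MeasureTheory.IntegrableOn q (Set.Icc a b)

/-- `q` is a global solution on `If` of the Riemann–Liouville Cauchy problem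
`D^{α_i}_{a+}[q_i] = F_i(q(·),·)` a.e. on `If`, `I^{1-α_i}_{a+}[q_i](a) = (qa)_i`. -/
def IsRLSolution (a : ℝ) (If : Set ℝ) {m : ℕ} (α : Fin m → ℝ)
    (qa : EuclideanSpace ℝ (Fin m))
    (F : EuclideanSpace ℝ (Fin m) → ℝ → EuclideanSpace ℝ (Fin m))
    (q : ℝ → EuclideanSpace ℝ (Fin m)) : Prop :=
  (∀ i, LocIntegrableOn a If fun t => q t i) ∧
  ∀ i, ∃ h : ℝ → ℝ, LocIntegrableOn a If h ∧
    (∀ᵐ t ∂(MeasureTheory.volume.restrict If),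
      rlInt a (1 - α i) (fun τ => q τ i) t = qa i + ∫ τ in a..t, h τ) ∧
    (∀ᵐ t ∂(MeasureTheory.volume.restrict If), h t = F (q t) t i)

open Filter Topology Convolution

/-- exponentially weighted kernel -/
noncomputable def Ek (l α s : ℝ) : ℝ :=
  if 0 < s then s ^ (α - 1) * Real.exp (-(l * s)) / Real.Gamma α else 0

lemma Ek_nonneg {l α : ℝ} (hα : 0 < α) (s : ℝ) : 0 ≤ Ek l α s := by
  unfold Ek
  have := Real.Gamma_pos_of_pos hα
  split_ifs <;> positivity

lemma Ek_eq_indicator (l α : ℝ) :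
    Ek l α = indicator (Ioi 0)
      (fun s => s ^ (α - 1) * Real.exp (-(l * s)) / Real.Gamma α) := by
  ext s
  simp [Ek, indicator]

lemma Ek_integrable {l α : ℝ} (hl : 0 < l) (hα : 0 < α) : Integrable (Ek l α) := by
  rw [Ek_eq_indicator, integrable_indicator_iff measurableSet_Ioi]
  have := integrableOn_rpow_mul_exp_neg_mul_rpow (p := 1) (s := α - 1) (b := l) (by linarith)
    one_pos hl
  simp only [Real.rpow_one, neg_mul] at this
  exact this.div_const _

lemma Ek_integral {l α : ℝ} (hl : 0 < l) (hα : 0 < α) : ∫ s, Ek l α s = (1 / l) ^ α := by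
  rw [Ek_eq_indicator, integral_indicator measurableSet_Ioi, integral_div,
    Real.integral_rpow_mul_exp_neg_mul_Ioi hα hl]
  have := (Real.Gamma_pos_of_pos hα).ne'
  field_simp

lemma real_beta {α β x : ℝ} (hα : 0 < α) (hβ : 0 < β) (hx : 0 < x) :
    ∫ t in (0:ℝ)..x, t ^ (α - 1) * (x - t) ^ (β - 1) =
      x ^ (α + β - 1) * (Real.Gamma α * Real.Gamma β / Real.Gamma (α + β)) := by
  have h := Complex.betaIntegral_scaled α β hx
  have hb := Complex.betaIntegral_eq_Gamma_mul_div (α : ℂ) β (by simpa) (by simpa)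
  rw [hb] at h
  apply Complex.ofReal_injective
  rw [← intervalIntegral.integral_ofReal]
  push_cast
  rw [Complex.ofReal_cpow hx.le, ← Complex.Gamma_ofReal, ← Complex.Gamma_ofReal,
    ← Complex.Gamma_ofReal]
  push_cast
  rw [← h]
  apply intervalIntegral.integral_congr
  intro t ht
  rw [uIcc_of_le hx.le] at ht
  simp only
  rw [Complex.ofReal_cpow ht.1, Complex.ofReal_cpow (by linarith [ht.2])]
  push_cast
  rfl

lemma Ek_conv {l α β : ℝ} (hα : 0 < α) (hβ : 0 < β) :
    (Ek l α ⋆[ContinuousLinearMap.mul ℝ ℝ, volume] Ek l β) = Ek l (α + β) := by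
  ext x
  rw [convolution_mul]
  by_cases hx : 0 < x
  · have h1 : ∀ t, Ek l α t * Ek l β (x - t) = indicator (Ioo 0 x)
        (fun t => (t ^ (α - 1) * (x - t) ^ (β - 1)) *
          (Real.exp (-(l * x)) / (Real.Gamma α * Real.Gamma β))) t := by
      intro t
      by_cases h0 : 0 < t
      · by_cases h2 : t < x
        · rw [indicator_of_mem (show t ∈ Ioo 0 x from ⟨h0, h2⟩)]
          simp only [Ek, h0, sub_pos, h2, if_true]
          rw [show -(l * x) = -(l * t) + -(l * (x - t)) by ring, Real.exp_add]
          have := (Real.Gamma_pos_of_pos hα).ne'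
          have := (Real.Gamma_pos_of_pos hβ).ne'
          field_simp
        · rw [indicator_of_notMem (by simp [h2])]
          simp [Ek, h2]
      · rw [indicator_of_notMem (by simp [h0])]
        simp [Ek, h0]
    simp_rw [h1]
    rw [integral_indicator measurableSet_Ioo, ← integral_Ioc_eq_integral_Ioo,
      ← intervalIntegral.integral_of_le hx.le, intervalIntegral.integral_mul_const,
      real_beta hα hβ hx]
    simp only [Ek, hx, if_true]
    have := (Real.Gamma_pos_of_pos hα).ne'
    have := (Real.Gamma_pos_of_pos hβ).ne'
    have := (Real.Gamma_pos_of_pos (add_pos hα hβ)).ne'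
    field_simp
  · rw [show Ek l (α + β) x = 0 by simp [Ek, hx]]
    apply integral_eq_zero_of_ae
    refine Eventually.of_forall fun t => ?_
    by_cases h0 : 0 < t
    · have : ¬ t < x := by linarith
      simp [Ek, this]
    · simp [Ek, h0]

/-- the weighted convolution is the weighted fractional integral -/
lemma conv_eq {a b l α : ℝ} (hα : 0 < α) {u V : ℝ → ℝ}
    (hV0 : ∀ τ, τ < a → V τ = 0) (hV : ∀ τ ∈ Icc a b, V τ = Real.exp (-(l * τ)) * u τ)
    {t : ℝ} (ht : t ∈ Icc a b) :
    (V ⋆[ContinuousLinearMap.mul ℝ ℝ, volume] Ek l α) t =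
      Real.exp (-(l * t)) * rlInt a α u t := by
  rw [convolution_mul, rlInt, if_neg hα.ne']
  have h1 : ∀ τ, V τ * Ek l α (t - τ) = indicator (Ico a t)
      (fun τ => (Real.exp (-(l * t)) * (1 / Real.Gamma α)) * ((t - τ) ^ (α - 1) * u τ)) τ := by
    intro τ
    by_cases h0 : a ≤ τ
    · by_cases h2 : τ < t
      · rw [indicator_of_mem (show τ ∈ Ico a t from ⟨h0, h2⟩), hV τ ⟨h0, h2.le.trans ht.2⟩]
        simp only [Ek, sub_pos, h2, if_true]
        rw [show -(l * t) = -(l * τ) + -(l * (t - τ)) by ring, Real.exp_add]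
        ring
      · rw [indicator_of_notMem (by simp [h2])]
        simp [Ek, h2]
    · rw [indicator_of_notMem (by simp [h0]), hV0 τ (not_le.1 h0)]
      simp
  simp_rw [h1]
  rw [integral_indicator measurableSet_Ico, integral_const_mul, integral_Ico_eq_integral_Ioc,
    ← intervalIntegral.integral_of_le ht.1]
  ring

/-- weighted extension by zero -/
noncomputable def wext (a b l : ℝ) (u : ℝ → ℝ) : ℝ → ℝ :=
  indicator (Icc a b) (fun τ => Real.exp (-(l * τ)) * u τ)

lemma exp_mul_integrableOn {a b : ℝ} (l : ℝ) {u : ℝ → ℝ} (hu : IntegrableOn u (Icc a b)) :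
    IntegrableOn (fun τ => Real.exp (l * τ) * u τ) (Icc a b) :=
  hu.continuousOn_mul (by fun_prop) isCompact_Icc

lemma wexp_integrableOn {a b : ℝ} (l : ℝ) {u : ℝ → ℝ} (hu : IntegrableOn u (Icc a b)) :
    IntegrableOn (fun τ => Real.exp (-(l * τ)) * u τ) (Icc a b) :=
  hu.continuousOn_mul (by fun_prop) isCompact_Icc

lemma wext_integrable {a b : ℝ} (l : ℝ) {u : ℝ → ℝ} (hu : IntegrableOn u (Icc a b)) :
    Integrable (wext a b l u) := by
  rw [wext, integrable_indicator_iff measurableSet_Icc]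
  exact wexp_integrableOn l hu

lemma wext_conv {a b l α : ℝ} (hα : 0 < α) {u : ℝ → ℝ} {t : ℝ} (ht : t ∈ Icc a b) :
    (wext a b l u ⋆[ContinuousLinearMap.mul ℝ ℝ, volume] Ek l α) t =
      Real.exp (-(l * t)) * rlInt a α u t := by
  apply conv_eq hα (b := b) _ _ ht
  · intro τ h
    simp [wext, h]
  · intro τ h
    simp only [wext, indicator_of_mem h]

lemma of_wexp_integrableOn {a b : ℝ} (l : ℝ) {u : ℝ → ℝ}
    (hu : IntegrableOn (fun τ => Real.exp (-(l * τ)) * u τ) (Icc a b)) :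
    IntegrableOn u (Icc a b) := by
  refine (exp_mul_integrableOn l hu).congr_fun (fun t _ => ?_) measurableSet_Icc
  simp only
  rw [← mul_assoc, ← Real.exp_add]
  simp

lemma rl_integrableOn {a b α : ℝ} (hα : 0 < α) {u : ℝ → ℝ} (hu : IntegrableOn u (Icc a b)) :
    IntegrableOn (rlInt a α u) (Icc a b) := by
  apply of_wexp_integrableOn 1
  refine ((wext_integrable 1 hu).integrable_convolution (ContinuousLinearMap.mul ℝ ℝ)
    (Ek_integrable one_pos hα)).integrableOn.congr_fun (fun t ht => ?_) measurableSet_Icc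
  exact wext_conv hα ht

lemma rl_bound {a b l α : ℝ} (hl : 0 < l) (hα : 0 < α) {u : ℝ → ℝ}
    (hu : IntegrableOn u (Icc a b)) :
    ∫ t in Icc a b, Real.exp (-(l * t)) * |rlInt a α u t| ≤
      (1 / l) ^ α * ∫ t in Icc a b, Real.exp (-(l * t)) * |u t| := by
  have hi := (wext_integrable l hu)
  have hE := Ek_integrable hl hα
  have hc := hi.integrable_convolution (ContinuousLinearMap.mul ℝ ℝ) hE
  have hc' := hi.norm.integrable_convolution (ContinuousLinearMap.mul ℝ ℝ) hE
  calc ∫ t in Icc a b, Real.exp (-(l * t)) * |rlInt a α u t|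
      = ∫ t in Icc a b, ‖(wext a b l u ⋆[ContinuousLinearMap.mul ℝ ℝ, volume] Ek l α) t‖ := by
        apply setIntegral_congr_fun measurableSet_Icc
        intro t ht
        simp only
        rw [wext_conv hα ht, Real.norm_eq_abs, abs_mul, abs_of_pos (Real.exp_pos _)]
    _ ≤ ∫ t, ‖(wext a b l u ⋆[ContinuousLinearMap.mul ℝ ℝ, volume] Ek l α) t‖ :=
        setIntegral_le_integral hc.norm (Eventually.of_forall fun _ => norm_nonneg _)
    _ ≤ ∫ t, ((fun s => ‖wext a b l u s‖) ⋆[ContinuousLinearMap.mul ℝ ℝ, volume] Ek l α) t := by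
        apply integral_mono hc.norm hc'
        intro t
        simp only
        rw [convolution_mul, convolution_mul]
        refine (norm_integral_le_integral_norm _).trans_eq ?_
        congr 1
        ext s
        rw [norm_mul, Real.norm_of_nonneg (Ek_nonneg hα _)]
    _ = (∫ s, ‖wext a b l u s‖) * (1 / l) ^ α := by
        rw [integral_convolution (ContinuousLinearMap.mul ℝ ℝ) hi.norm hE, Ek_integral hl hα]
        rfl
    _ = _ := by
        rw [mul_comm]
        congr 1
        rw [← integral_indicator measurableSet_Icc]
        congr 1
        ext s
        by_cases hs : s ∈ Icc a b
        · simp only [wext, indicator_of_mem hs, norm_mul, Real.norm_eq_abs,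
            abs_of_pos (Real.exp_pos _)]
        · simp only [wext, indicator_of_notMem hs, norm_zero]

lemma rl_ae_intervalIntegrable {a b α : ℝ} (hα : 0 < α) {u : ℝ → ℝ}
    (hu : IntegrableOn u (Icc a b)) :
    ∀ᵐ t ∂(volume.restrict (Icc a b)),
      IntervalIntegrable (fun τ => (t - τ) ^ (α - 1) * u τ) volume a t := by
  have h := (wext_integrable 1 hu).ae_convolution_exists (ContinuousLinearMap.mul ℝ ℝ)
    (Ek_integrable one_pos hα)
  filter_upwards [ae_restrict_of_ae h, ae_restrict_mem measurableSet_Icc] with t h1 ht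
  rw [intervalIntegrable_iff_integrableOn_Ico_of_le ht.1]
  have h2 : Integrable (fun τ => wext a b 1 u τ * Ek 1 α (t - τ)) := h1
  have h7 : IntegrableOn (fun τ => (Real.exp t * Real.Gamma α) *
      (wext a b 1 u τ * Ek 1 α (t - τ))) (Ico a t) := h2.integrableOn.const_mul _
  refine h7.congr_fun (fun τ hτ => ?_) measurableSet_Ico
  have hm : τ ∈ Icc a b := ⟨hτ.1, hτ.2.le.trans ht.2⟩
  have := (Real.Gamma_pos_of_pos hα).ne'
  simp only [wext, indicator_of_mem hm, Ek, sub_pos, hτ.2, if_true]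
  rw [show t = τ + (t - τ) by ring, Real.exp_add]
  simp only [add_sub_cancel, one_mul, Real.exp_neg]
  have h5 := (Real.exp_pos τ).ne'
  have h6 := (Real.exp_pos (t - τ)).ne'
  field_simp
  
lemma rl_add {a b α : ℝ} (hα : 0 ≤ α) {u v : ℝ → ℝ}
    (hu : IntegrableOn u (Icc a b)) (hv : IntegrableOn v (Icc a b)) :
    ∀ᵐ t ∂(volume.restrict (Icc a b)),
      rlInt a α (fun τ => u τ + v τ) t = rlInt a α u t + rlInt a α v t := by
  rcases hα.eq_or_lt with h | h
  · simp [rlInt, ← h]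
  filter_upwards [rl_ae_intervalIntegrable h hu, rl_ae_intervalIntegrable h hv] with t h1 h2
  simp only [rlInt, if_neg h.ne', mul_add]
  rw [intervalIntegral.integral_add h1 h2, mul_add]

lemma rl_const_mul (a α c : ℝ) (u : ℝ → ℝ) (t : ℝ) :
      rlInt a α (fun τ => c * u τ) t = c * rlInt a α u t := by
  unfold rlInt
  split_ifs
  · rfl
  · have h : ∫ τ in a..t, (t - τ) ^ (α - 1) * (c * u τ)
        = c * ∫ τ in a..t, (t - τ) ^ (α - 1) * u τ := by
      rw [← intervalIntegral.integral_const_mul]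
      apply intervalIntegral.integral_congr
      intro x _
      simp only
      ring
    rw [h]
    ring

lemma rl_sub {a b α : ℝ} (hα : 0 ≤ α) {u v : ℝ → ℝ}
    (hu : IntegrableOn u (Icc a b)) (hv : IntegrableOn v (Icc a b)) :
    ∀ᵐ t ∂(volume.restrict (Icc a b)),
      rlInt a α (fun τ => u τ - v τ) t = rlInt a α u t - rlInt a α v t := by
  have h := rl_add hα hu (hv.const_mul (-1))
  filter_upwards [h] with t ht
  rw [rl_const_mul] at ht
  simp only [neg_mul, one_mul, ← sub_eq_add_neg] at ht
  exact ht

lemma rl_congr {a b α : ℝ} (hα : 0 < α) {u v : ℝ → ℝ}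
    (h : ∀ᵐ t ∂(volume.restrict (Icc a b)), u t = v t) {t : ℝ} (ht : t ∈ Icc a b) :
    rlInt a α u t = rlInt a α v t := by
  simp only [rlInt, if_neg hα.ne']
  congr 1
  rw [intervalIntegral.integral_of_le ht.1, intervalIntegral.integral_of_le ht.1]
  apply integral_congr_ae
  have h2 := ae_restrict_of_ae_restrict_of_subset
    (show Ioc a t ⊆ Icc a b from fun x hx => ⟨hx.1.le, hx.2.trans ht.2⟩) h
  filter_upwards [h2] with x hx
  rw [hx]

lemma rl_semigroup {a b α β : ℝ} (hα : 0 < α) (hβ : 0 < β) {u : ℝ → ℝ}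
    (hu : IntegrableOn u (Icc a b)) :
    ∀ᵐ t ∂(volume.restrict (Icc a b)),
      rlInt a α (rlInt a β u) t = rlInt a (β + α) u t := by
  have hi := wext_integrable 1 hu
  have hEa := Ek_integrable one_pos hα
  have hEb := Ek_integrable one_pos hβ
  have hc := hEb.norm.integrable_convolution (ContinuousLinearMap.mul ℝ ℝ) hEa.norm
  have h3 := hi.norm.ae_convolution_exists (ContinuousLinearMap.mul ℝ ℝ) hc
  filter_upwards [ae_restrict_of_ae h3, ae_restrict_mem measurableSet_Icc] with t h4 ht
  have key := convolution_assoc (ContinuousLinearMap.mul ℝ ℝ) (ContinuousLinearMap.mul ℝ ℝ)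
    (ContinuousLinearMap.mul ℝ ℝ) (ContinuousLinearMap.mul ℝ ℝ)
    (f := wext a b 1 u) (g := Ek 1 β) (k := Ek 1 α) (x₀ := t) (fun x y z => mul_assoc x y z)
    hi.aestronglyMeasurable hEb.aestronglyMeasurable hEa.aestronglyMeasurable
    (hi.ae_convolution_exists (ContinuousLinearMap.mul ℝ ℝ) hEb)
    (hEb.norm.ae_convolution_exists (ContinuousLinearMap.mul ℝ ℝ) hEa.norm) h4
  rw [Ek_conv hβ hα, wext_conv (add_pos hβ hα) ht,
    conv_eq hα (b := b) (u := rlInt a β u) _ _ ht] at key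
  · exact mul_left_cancel₀ (Real.exp_pos _).ne' key
  · intro τ hτ
    rw [convolution_mul]
    apply integral_eq_zero_of_ae
    refine Eventually.of_forall fun s => ?_
    by_cases hs : s < a
    · simp [wext, hs]
    · have : ¬ s < τ := by linarith
      simp [Ek, this]
  · intro τ hτ
    exact wext_conv hβ hτ

lemma rl_one (a : ℝ) (u : ℝ → ℝ) (t : ℝ) : rlInt a 1 u t = ∫ τ in a..t, u τ := by
  simp [rlInt]

lemma rl_one_inj {a b : ℝ} {u : ℝ → ℝ} (hu : IntegrableOn u (Icc a b))
    (h : ∀ᵐ t ∂(volume.restrict (Icc a b)), rlInt a 1 u t = 0) :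
    ∀ᵐ t ∂(volume.restrict (Icc a b)), u t = 0 := by
  rcases lt_or_ge a b with hab | hab
  swap
  · rw [show volume.restrict (Icc a b) = 0 by simp [hab]]
    simp
  simp_rw [rl_one] at h
  have hui : IntervalIntegrable u volume a b := by
    rwa [intervalIntegrable_iff_integrableOn_Icc_of_le hab.le]
  have hcont : ContinuousOn (fun t => ∫ τ in a..t, u τ) (Icc a b) := by
    have := intervalIntegral.continuousOn_primitive_interval (a := a) (b := b) (f := u)
      (μ := volume) (by rwa [uIcc_of_le hab.le])
    rwa [uIcc_of_le hab.le] at this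
  have hz : ∀ t ∈ Icc a b, ∫ τ in a..t, u τ = 0 := by
    have := Measure.eqOn_Icc_of_ae_eq (μ := volume) hab.ne h hcont continuousOn_const
    exact this
  have hd := hui.ae_hasDerivAt_integral
  rw [← restrict_Ioo_eq_restrict_Icc]
  rw [ae_restrict_iff' measurableSet_Ioo]
  filter_upwards [hd] with x hx hxm
  have h1 := hx (by rw [uIcc_of_le hab.le]; exact ⟨hxm.1.le, hxm.2.le⟩) a
    (by rw [uIcc_of_le hab.le]; exact ⟨le_rfl, hab.le⟩)
  have h2 : HasDerivAt (fun t => ∫ τ in a..t, u τ) 0 x := by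
    refine (hasDerivAt_const x (0:ℝ)).congr_of_eventuallyEq ?_
    filter_upwards [Icc_mem_nhds hxm.1 hxm.2] with y hy
    exact hz y hy
  exact h1.unique h2

/-- the power function solving the homogeneous problem -/
noncomputable def gfun (a α t : ℝ) : ℝ := (t - a) ^ (α - 1) / Real.Gamma α

lemma gfun_integrableOn {a α : ℝ} (hα : 0 < α) (b : ℝ) : IntegrableOn (gfun a α) (Icc a b) := by
  rcases le_or_gt a b with hab | hab
  · rw [← intervalIntegrable_iff_integrableOn_Icc_of_le hab]
    have h := (intervalIntegral.intervalIntegrable_rpow' (a := 0) (b := b - a) (r := α - 1)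
      (by linarith)).comp_sub_right a
    simp only [zero_add, sub_add_cancel] at h
    exact h.div_const _
  · simp [hab]

lemma rl_gfun {a α t : ℝ} (hα : 0 < α) (hα1 : α ≤ 1) (ht : a < t) :
    rlInt a (1 - α) (gfun a α) t = 1 := by
  rcases hα1.eq_or_lt with h | h
  · simp [rlInt, h, gfun]
  have h1 : 0 < 1 - α := by linarith
  simp only [rlInt, if_neg h1.ne', gfun]
  have hb := real_beta hα h1 (sub_pos.2 ht)
  have h2 := intervalIntegral.integral_comp_sub_right (a := a) (b := t)
    (fun s => s ^ (α - 1) * ((t - a) - s) ^ (1 - α - 1)) a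
  rw [sub_self, hb] at h2
  simp only [add_sub_cancel, sub_self, Real.rpow_zero, one_mul, Real.Gamma_one, div_one,
    sub_sub_sub_cancel_right] at h2
  have h3 : ∫ τ in a..t, (t - τ) ^ (1 - α - 1) * ((τ - a) ^ (α - 1) / Real.Gamma α)
      = (∫ τ in a..t, (τ - a) ^ (α - 1) * (t - τ) ^ (1 - α - 1)) / Real.Gamma α := by
    rw [← intervalIntegral.integral_div]
    congr 1
    ext τ
    ring
  rw [h3, h2]
  have := (Real.Gamma_pos_of_pos hα).ne'
  have := (Real.Gamma_pos_of_pos h1).ne'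
  field_simp

lemma rl_congr_ae {a b α : ℝ} (hα : 0 ≤ α) {u v : ℝ → ℝ}
    (h : ∀ᵐ t ∂(volume.restrict (Icc a b)), u t = v t) :
    ∀ᵐ t ∂(volume.restrict (Icc a b)), rlInt a α u t = rlInt a α v t := by
  rcases hα.eq_or_lt with h0 | h0
  · simpa [rlInt, ← h0] using h
  · filter_upwards [ae_restrict_mem measurableSet_Icc] with t ht using rl_congr h0 h ht

lemma rl_zero (a : ℝ) (u : ℝ → ℝ) : rlInt a 0 u = u := by
  ext t
  simp [rlInt]

lemma rl_semigroup' {a b α β : ℝ} (hα : 0 ≤ α) (hβ : 0 ≤ β) {u : ℝ → ℝ}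
    (hu : IntegrableOn u (Icc a b)) :
    ∀ᵐ t ∂(volume.restrict (Icc a b)),
      rlInt a α (rlInt a β u) t = rlInt a (β + α) u t := by
  rcases hα.eq_or_lt with h0 | h0
  · simp [← h0, rl_zero]
  rcases hβ.eq_or_lt with h1 | h1
  · simp [← h1, rl_zero]
  exact rl_semigroup h0 h1 hu

lemma ae_If {a : ℝ} {If : Set ℝ} (haI : a ∈ If) (hIsub : If ⊆ Set.Ici a)
    (hIord : If.OrdConnected) {P : ℝ → Prop}
    (h : ∀ b ∈ If, ∀ᵐ t ∂(volume.restrict (Icc a b)), P t) :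
    ∀ᵐ t ∂(volume.restrict If), P t := by
  by_cases hM : ∃ M ∈ If, ∀ x ∈ If, x ≤ M
  · obtain ⟨M, hM, hx⟩ := hM
    exact ae_restrict_of_ae_restrict_of_subset
      (show If ⊆ Icc a M from fun x hxI => ⟨hIsub hxI, hx x hxI⟩) (h M hM)
  · push Not at hM
    have hsub : If ⊆ ⋃ r : {r : ℚ // (r : ℝ) ∈ If}, Icc a ((r : ℚ) : ℝ) := by
      intro x hx
      obtain ⟨y, hy, hxy⟩ := hM x hx
      obtain ⟨r, h1, h2⟩ := exists_rat_btwn hxy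
      exact mem_iUnion.2 ⟨⟨r, hIord.out hx hy ⟨h1.le, h2.le⟩⟩, hIsub hx, h1.le⟩
    refine ae_restrict_of_ae_restrict_of_subset hsub ?_
    rw [ae_restrict_iUnion_iff]
    exact fun r => h _ r.2

/-- the local hypotheses on the right-hand side -/
structure FH (a b L : ℝ) {m : ℕ}
    (F : EuclideanSpace ℝ (Fin m) → ℝ → EuclideanSpace ℝ (Fin m)) : Prop where
  nonneg : 0 ≤ L
  lip : ∀ᵐ t ∂(volume.restrict (Icc a b)), ∀ x y, ‖F x t - F y t‖ ≤ L * ‖x - y‖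
  meas : ∀ x, AEStronglyMeasurable (fun t => F x t) (volume.restrict (Icc a b))
  zero : IntegrableOn (fun t => F 0 t) (Icc a b)

lemma lip_ae {X Y : Type*} [NormedAddCommGroup X] [SecondCountableTopology X]
    [NormedAddCommGroup Y]
    {μ : Measure ℝ} {L : ℝ} {F : X → ℝ → Y}
    (hc : ∀ᵐ t ∂μ, Continuous fun x => F x t)
    (h : ∀ x₁ x₂, ∀ᵐ t ∂μ, ‖F x₂ t - F x₁ t‖ ≤ L * ‖x₂ - x₁‖) :
    ∀ᵐ t ∂μ, ∀ x y, ‖F x t - F y t‖ ≤ L * ‖x - y‖ := by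
  have h1 : ∀ᵐ t ∂μ, ∀ i j : ℕ, ‖F (TopologicalSpace.denseSeq X i) t -
      F (TopologicalSpace.denseSeq X j) t‖ ≤
      L * ‖TopologicalSpace.denseSeq X i - TopologicalSpace.denseSeq X j‖ := by
    rw [ae_all_iff]
    intro i
    rw [ae_all_iff]
    intro j
    exact h _ _
  filter_upwards [hc, h1] with t ht h2 x y
  refine (TopologicalSpace.denseRange_denseSeq X).induction_on₂
    (p := fun x y => ‖F x t - F y t‖ ≤ L * ‖x - y‖) ?_ h2 x y
  apply isClosed_le
  · exact ((ht.comp continuous_fst).sub (ht.comp continuous_snd)).norm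
  · exact continuous_const.mul (continuous_fst.sub continuous_snd).norm

lemma carath_meas {X Y : Type*} [NormedAddCommGroup X]
    [NormedAddCommGroup Y]
    {μ : Measure ℝ} {F : X → ℝ → Y} (hm : ∀ x, AEStronglyMeasurable (fun t => F x t) μ)
    (hc : ∀ᵐ t ∂μ, Continuous fun x => F x t) {q : ℝ → X} (hq : AEStronglyMeasurable q μ) :
    AEStronglyMeasurable (fun t => F (q t) t) μ := by
  obtain ⟨q', hq', he⟩ := hq
  have h1 : AEStronglyMeasurable (fun t => F (q' t) t) μ := by
    refine aestronglyMeasurable_of_tendsto_ae atTop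
      (f := fun n t => F (hq'.approx n t) t) ?_ ?_
    · intro n
      have : (fun t => F (hq'.approx n t) t) = fun t => ∑ y ∈ (hq'.approx n).range,
          indicator ((hq'.approx n) ⁻¹' {y}) (fun t => F y t) t := by
        ext t
        rw [Finset.sum_eq_single (hq'.approx n t)]
        · simp
        · intro y _ hy
          rw [indicator_of_notMem]
          simpa using hy.symm
        · intro h
          exact absurd (SimpleFunc.mem_range_self _ _) h
      rw [this]
      apply Finset.aestronglyMeasurable_fun_sum
      intro y _
      exact (hm y).indicator ((hq'.approx n).measurableSet_fiber y)
    · filter_upwards [hc] with t ht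
      exact (ht.tendsto _).comp (hq'.tendsto_approx t)
  refine h1.congr ?_
  filter_upwards [he] with t ht
  rw [ht]

lemma euclid_meas {m : ℕ} {μ : Measure ℝ} {q : ℝ → EuclideanSpace ℝ (Fin m)}
    (h : ∀ i, AEStronglyMeasurable (fun t => q t i) μ) : AEStronglyMeasurable q μ := by
  have h1 : AEMeasurable (fun t => fun i => q t i) μ :=
    aemeasurable_pi_iff.2 fun i => (h i).aemeasurable
  have h2 := (PiLp.continuous_toLp 2 (fun _ : Fin m => ℝ)).comp_aestronglyMeasurable
    h1.aestronglyMeasurable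
  exact h2

lemma euclid_norm_le {m : ℕ} (x : EuclideanSpace ℝ (Fin m)) : ‖x‖ ≤ ∑ i, |x i| := by
  rw [EuclideanSpace.norm_eq]
  apply Real.sqrt_le_iff.2
  refine ⟨Finset.sum_nonneg fun i _ => abs_nonneg _, ?_⟩
  exact Finset.sum_sq_le_sq_sum_of_nonneg fun i _ => abs_nonneg _

lemma euclid_int {m : ℕ} {μ : Measure ℝ} {q : ℝ → EuclideanSpace ℝ (Fin m)}
    (h : ∀ i, Integrable (fun t => q t i) μ) : Integrable q μ := by
  refine Integrable.mono' (g := fun t => ∑ i, |q t i|) ?_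
    (euclid_meas fun i => (h i).aestronglyMeasurable) ?_
  · exact integrable_finsetSum _ fun i _ => (h i).abs
  · exact Eventually.of_forall fun t => euclid_norm_le _

lemma F_int {a b L : ℝ} {m : ℕ}
    {F : EuclideanSpace ℝ (Fin m) → ℝ → EuclideanSpace ℝ (Fin m)} (hF : FH a b L F)
    {q : ℝ → EuclideanSpace ℝ (Fin m)} (hq : ∀ i, IntegrableOn (fun t => q t i) (Icc a b))
    (i : Fin m) : IntegrableOn (fun t => F (q t) t i) (Icc a b) := by
  have hqi : Integrable q (volume.restrict (Icc a b)) := euclid_int hq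
  have hc : ∀ᵐ t ∂(volume.restrict (Icc a b)), Continuous fun x => F x t := by
    filter_upwards [hF.lip] with t ht
    refine (LipschitzWith.of_dist_le_mul (K := ⟨L, hF.nonneg⟩) fun x y => ?_).continuous
    rw [dist_eq_norm, dist_eq_norm]
    exact ht x y
  have hm := carath_meas hF.meas hc hqi.aestronglyMeasurable
  have hz : Integrable (fun t => F 0 t) (volume.restrict (Icc a b)) := hF.zero
  refine Integrable.mono' (g := fun t => ‖F 0 t‖ + L * ‖q t‖)
    (hz.norm.add (hqi.norm.const_mul L)) ?_ ?_
  · exact (EuclideanSpace.proj (𝕜 := ℝ) i).continuous.comp_aestronglyMeasurable hm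
  · filter_upwards [hF.lip] with t ht
    refine (PiLp.norm_apply_le _ i).trans ?_
    have := ht (q t) 0
    rw [sub_zero] at this
    have h2 : ‖F (q t) t‖ ≤ ‖F 0 t‖ + ‖F (q t) t - F 0 t‖ := by
      have := norm_add_le (F 0 t) (F (q t) t - F 0 t)
      simpa using this
    linarith

lemma exists_weight {m : ℕ} {α : Fin m → ℝ} (hα : ∀ i, 0 < α i) (K : ℝ) :
    ∃ l : ℝ, 0 < l ∧ ∀ i, (1 / l) ^ (α i) * K ≤ 1 / 2 := by
  have h : ∀ᶠ l : ℝ in atTop, 0 < l ∧ ∀ i, (1 / l) ^ (α i) * K ≤ 1 / 2 := by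
    refine (eventually_gt_atTop 0).and (eventually_all.2 fun i => ?_)
    have h1 : Tendsto (fun l : ℝ => (1 / l) ^ (α i) * K) atTop (𝓝 (0 ^ (α i) * K)) := by
      simp_rw [one_div]
      exact (tendsto_inv_atTop_zero.rpow_const (Or.inr (hα i).le)).mul_const K
    rw [Real.zero_rpow (hα i).ne', zero_mul] at h1
    exact h1.eventually_le_const (by norm_num)
  exact h.exists

lemma contraction {a b L : ℝ} {m : ℕ}
    {F : EuclideanSpace ℝ (Fin m) → ℝ → EuclideanSpace ℝ (Fin m)} (hF : FH a b L F)
    {α : Fin m → ℝ} (hα : ∀ i, 0 < α i) :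
    ∃ l : ℝ, 0 < l ∧ ∀ w w' : ℝ → EuclideanSpace ℝ (Fin m),
      (∀ i, IntegrableOn (fun t => w t i) (Icc a b)) →
      (∀ i, IntegrableOn (fun t => w' t i) (Icc a b)) →
      ∑ i, ∫ t in Icc a b, Real.exp (-(l * t)) *
        |rlInt a (α i) (fun τ => F (w τ) τ i - F (w' τ) τ i) t| ≤
      1 / 2 * ∑ i, ∫ t in Icc a b, Real.exp (-(l * t)) * |w t i - w' t i| := by
  obtain ⟨l, hl, hK⟩ := exists_weight hα (m * L)
  refine ⟨l, hl, fun w w' hw hw' => ?_⟩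
  set S := ∑ i, ∫ t in Icc a b, Real.exp (-(l * t)) * |w t i - w' t i| with hS
  have hS0 : 0 ≤ S := Finset.sum_nonneg fun i _ => integral_nonneg fun t => by positivity
  have hb : ∀ i, (∫ t in Icc a b, Real.exp (-(l * t)) *
        |rlInt a (α i) (fun τ => F (w τ) τ i - F (w' τ) τ i) t|) ≤ (1 / l) ^ (α i) * (L * S) := by
    intro i
    have hd := (F_int hF hw i).sub (F_int hF hw' i)
    refine (rl_bound hl (hα i) hd).trans ?_
    apply mul_le_mul_of_nonneg_left _ (by positivity)
    have hint : ∀ j, Integrable (fun t => Real.exp (-(l * t)) * |w t j - w' t j|)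
        (volume.restrict (Icc a b)) := fun j =>
      wexp_integrableOn l (Integrable.abs ((hw j).sub (hw' j)))
    rw [hS, ← integral_finsetSum _ fun j _ => hint j, ← integral_const_mul]
    apply integral_mono_ae
    · exact wexp_integrableOn l hd.abs
    · exact (integrable_finsetSum _ fun j _ => hint j).const_mul L
    · filter_upwards [hF.lip] with t ht
      have h1 : |F (w t) t i - F (w' t) t i| ≤ ‖F (w t) t - F (w' t) t‖ := by
        have := PiLp.norm_apply_le (F (w t) t - F (w' t) t) i
        simpa using this
      have h2 := ht (w t) (w' t)
      have h3 := euclid_norm_le (w t - w' t)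
      simp only [PiLp.sub_apply] at h3
      rw [← Finset.mul_sum, mul_left_comm]
      apply mul_le_mul_of_nonneg_left _ (Real.exp_pos _).le
      exact (h1.trans h2).trans (mul_le_mul_of_nonneg_left h3 hF.nonneg)
  rcases Nat.eq_zero_or_pos m with h0 | h0
  · subst h0
    simp [hS]
  have hm : (0:ℝ) < m := by exact_mod_cast h0
  calc _ ≤ ∑ i : Fin m, (1 / 2 * S) / m := by
        apply Finset.sum_le_sum
        intro i _
        refine (hb i).trans ?_
        rw [le_div_iff₀ hm]
        have := mul_le_mul_of_nonneg_right (hK i) hS0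
        linarith
    _ = 1 / 2 * S := by
        simp
        field_simp

lemma L1_lim {μ : Measure ℝ} {f : ℕ → ℝ → ℝ} (hf : ∀ n, Integrable (f n) μ) {C : ℝ} (hC : 0 ≤ C)
    (h : ∀ n, ∫ t, |f (n + 1) t - f n t| ∂μ ≤ C * (1 / 2) ^ n) :
    (∀ᵐ t ∂μ, ∃ l, Tendsto (fun n => f n t) atTop (𝓝 l)) ∧
    ∀ g : ℝ → ℝ, (∀ᵐ t ∂μ, Tendsto (fun n => f n t) atTop (𝓝 (g t))) →
      Integrable g μ ∧ Tendsto (fun n => ∫ t, |f n t - g t| ∂μ) atTop (𝓝 0) := by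
  have hi : ∀ x y : ℕ, Integrable (fun t => |f x t - f y t|) μ :=
    fun x y => ((hf x).sub (hf y)).abs
  have tri : ∀ x y z : ℕ, ∫ t, |f x t - f z t| ∂μ ≤
      (∫ t, |f x t - f y t| ∂μ) + ∫ t, |f y t - f z t| ∂μ := by
    intro x y z
    rw [← integral_add (hi x y) (hi y z)]
    exact integral_mono (hi x z) ((hi x y).add (hi y z)) fun t => abs_sub_le _ _ _
  have h1 : ∀ N k : ℕ, ∫ t, |f (N + k) t - f N t| ∂μ ≤
      C * (1 / 2) ^ N * (2 * (1 - (1 / 2) ^ k)) := by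
    intro N k
    induction k with
    | zero => simp
    | succ k ih =>
      have h2 := tri (N + (k + 1)) (N + k) N
      have h3 := h (N + k)
      rw [pow_add] at h3
      rw [← add_assoc] at h2 ⊢
      rw [pow_succ]
      nlinarith
  have h2 : ∀ N n : ℕ, N ≤ n → ∫ t, |f n t - f N t| ∂μ ≤ 2 * C * (1 / 2) ^ N := by
    intro N n hn
    obtain ⟨k, rfl⟩ := Nat.exists_eq_add_of_le hn
    refine (h1 N k).trans ?_
    have : (0:ℝ) ≤ (1 / 2) ^ k := by positivity
    have h4 : (0:ℝ) ≤ C * (1 / 2) ^ N := by positivity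
    nlinarith
  have hnorm : ∀ g k : ℝ → ℝ, Integrable g μ → Integrable k μ →
      eLpNorm (g - k) 1 μ = ENNReal.ofReal (∫ t, |g t - k t| ∂μ) := by
    intro g k hg hk
    rw [eLpNorm_one_eq_lintegral_enorm, ← ofReal_integral_norm_eq_lintegral_enorm (hg.sub hk)]
    rfl
  have hB : ∑' i : ℕ, ENNReal.ofReal (4 * (C + 1) * (1 / 2) ^ i) ≠ ⊤ := by
    apply Summable.tsum_ofReal_ne_top
    exact summable_geometric_two.mul_left _
  have hcau : ∀ N n k : ℕ, N ≤ n → N ≤ k →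
      eLpNorm (f n - f k) 1 μ < ENNReal.ofReal (4 * (C + 1) * (1 / 2) ^ N) := by
    intro N n k hn hk
    rw [hnorm _ _ (hf n) (hf k)]
    have hp : (0:ℝ) < (1 / 2) ^ N := by positivity
    apply (ENNReal.ofReal_lt_ofReal_iff (by positivity)).2
    have h3 := tri n N k
    have h4 := h2 N n hn
    have h5 := h2 N k hk
    simp_rw [abs_sub_comm (f k _)] at h5
    nlinarith
  have hmeas : ∀ n, AEStronglyMeasurable (f n) μ := fun n => (hf n).aestronglyMeasurable
  refine ⟨Lp.ae_tendsto_of_cauchy_eLpNorm hmeas le_rfl hB hcau, fun g hg => ?_⟩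
  have ht := Lp.cauchy_tendsto_of_tendsto hmeas g hB hcau hg
  have hgi : Integrable g μ := memLp_one_iff_integrable.1
    (Lp.memLp_of_cauchy_tendsto le_rfl (fun n => memLp_one_iff_integrable.2 (hf n)) g
      (aestronglyMeasurable_of_tendsto_ae atTop hmeas hg) ht)
  refine ⟨hgi, ?_⟩
  simp_rw [fun n => hnorm (f n) g (hf n) hgi] at ht
  have h6 := (ENNReal.tendsto_toReal ENNReal.zero_ne_top).comp ht
  simp only [ENNReal.toReal_zero] at h6
  refine h6.congr fun n => ?_
  exact ENNReal.toReal_ofReal (integral_nonneg fun t => abs_nonneg _)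

/-- Picard iterates -/
noncomputable def Qs (a : ℝ) {m : ℕ} (α : Fin m → ℝ) (qa : EuclideanSpace ℝ (Fin m))
    (F : EuclideanSpace ℝ (Fin m) → ℝ → EuclideanSpace ℝ (Fin m)) :
    ℕ → ℝ → EuclideanSpace ℝ (Fin m)
  | 0 => fun _ => 0
  | n + 1 => fun t => WithLp.toLp 2 fun i =>
      qa i * gfun a (α i) t + rlInt a (α i) (fun τ => F (Qs a α qa F n τ) τ i) t

/-- limit of the Picard iterates -/
noncomputable def qlim (a : ℝ) {m : ℕ} (α : Fin m → ℝ) (qa : EuclideanSpace ℝ (Fin m))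
    (F : EuclideanSpace ℝ (Fin m) → ℝ → EuclideanSpace ℝ (Fin m)) (t : ℝ) :
    EuclideanSpace ℝ (Fin m) :=
  WithLp.toLp 2 fun i => limUnder atTop (fun n => Qs a α qa F n t i)

lemma Qs_succ (a : ℝ) {m : ℕ} (α : Fin m → ℝ) (qa : EuclideanSpace ℝ (Fin m))
    (F : EuclideanSpace ℝ (Fin m) → ℝ → EuclideanSpace ℝ (Fin m)) (n : ℕ) (t : ℝ) (i : Fin m) :
    Qs a α qa F (n + 1) t i =
      qa i * gfun a (α i) t + rlInt a (α i) (fun τ => F (Qs a α qa F n τ) τ i) t := rfl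

lemma Qs_int {a b L : ℝ} {m : ℕ}
    {F : EuclideanSpace ℝ (Fin m) → ℝ → EuclideanSpace ℝ (Fin m)} (hF : FH a b L F)
    {α : Fin m → ℝ} (hα : ∀ i, 0 < α i) (qa : EuclideanSpace ℝ (Fin m)) (n : ℕ) :
    ∀ i, IntegrableOn (fun t => Qs a α qa F n t i) (Icc a b) := by
  induction n with
  | zero => intro i; simp [Qs]
  | succ n ih =>
    intro i
    simp_rw [Qs_succ]
    exact ((gfun_integrableOn (hα i) b).const_mul (qa i)).add
      (rl_integrableOn (hα i) (F_int hF ih i))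

lemma exist_local {a b L : ℝ} {m : ℕ}
    {F : EuclideanSpace ℝ (Fin m) → ℝ → EuclideanSpace ℝ (Fin m)} (hF : FH a b L F)
    {α : Fin m → ℝ} (hα : ∀ i, 0 < α i) (qa : EuclideanSpace ℝ (Fin m)) :
    (∀ i, IntegrableOn (fun t => qlim a α qa F t i) (Icc a b)) ∧
    ∀ i, ∀ᵐ t ∂(volume.restrict (Icc a b)), qlim a α qa F t i =
      qa i * gfun a (α i) t + rlInt a (α i) (fun τ => F (qlim a α qa F τ) τ i) t := by
  obtain ⟨l, hl, hcon⟩ := contraction hF hα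
  set Q := Qs a α qa F with hQ
  have hQi : ∀ n i, IntegrableOn (fun t => Q n t i) (Icc a b) := Qs_int hF hα qa
  set D : ℕ → ℝ := fun n => ∑ i, ∫ t in Icc a b, Real.exp (-(l * t)) * |Q (n + 1) t i - Q n t i|
    with hD
  have hD0 : ∀ n, 0 ≤ D n := fun n =>
    Finset.sum_nonneg fun i _ => integral_nonneg fun t => by positivity
  have hDs : ∀ n, D (n + 1) ≤ 1 / 2 * D n := by
    intro n
    refine le_trans (le_of_eq ?_) (hcon (Q (n + 1)) (Q n) (hQi _) (hQi _))
    refine Finset.sum_congr rfl fun i _ => ?_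
    apply integral_congr_ae
    filter_upwards [rl_sub (hα i).le (F_int hF (hQi (n + 1)) i) (F_int hF (hQi n) i)] with t ht
    rw [ht, hQ, Qs_succ, Qs_succ, add_sub_add_left_eq_sub]
  have hDn : ∀ n, D n ≤ D 0 * (1 / 2) ^ n := by
    intro n
    induction n with
    | zero => simp
    | succ n ih =>
      rw [pow_succ]
      linarith [hDs n]
  have hfi : ∀ i n, Integrable (fun t => Real.exp (-(l * t)) * Q n t i)
      (volume.restrict (Icc a b)) := fun i n => wexp_integrableOn l (hQi n i)
  have hlim := fun i => L1_lim (hfi i) (hD0 0) (fun n => by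
    refine le_trans ?_ (hDn n)
    have h1 : ∀ t, |Real.exp (-(l * t)) * Q (n + 1) t i - Real.exp (-(l * t)) * Q n t i| =
        Real.exp (-(l * t)) * |Q (n + 1) t i - Q n t i| := fun t => by
      rw [← mul_sub, abs_mul, abs_of_pos (Real.exp_pos _)]
    simp_rw [h1]
    exact Finset.single_le_sum
      (f := fun i => ∫ t in Icc a b, Real.exp (-(l * t)) * |Q (n + 1) t i - Q n t i|)
      (fun i _ => integral_nonneg fun t => by positivity) (Finset.mem_univ i))
  have htend : ∀ i, ∀ᵐ t ∂(volume.restrict (Icc a b)),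
      Tendsto (fun n => Q n t i) atTop (𝓝 (qlim a α qa F t i)) := by
    intro i
    filter_upwards [(hlim i).1] with t ht
    obtain ⟨y, hy⟩ := ht
    have h2 := hy.const_mul (Real.exp (l * t))
    simp_rw [← mul_assoc, ← Real.exp_add] at h2
    simp only [add_neg_cancel, Real.exp_zero, one_mul] at h2
    exact tendsto_nhds_limUnder ⟨_, h2⟩
  have hconv := fun i => (hlim i).2 (fun t => Real.exp (-(l * t)) * qlim a α qa F t i) (by
    filter_upwards [htend i] with t ht
    exact ht.const_mul _)
  set q := qlim a α qa F with hq
  have hqi : ∀ i, IntegrableOn (fun t => q t i) (Icc a b) :=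
    fun i => of_wexp_integrableOn l (hconv i).1
  refine ⟨hqi, ?_⟩
  have habs : ∀ n i t, |Real.exp (-(l * t)) * Q n t i - Real.exp (-(l * t)) * q t i| =
      Real.exp (-(l * t)) * |Q n t i - q t i| := fun n i t => by
    rw [← mul_sub, abs_mul, abs_of_pos (Real.exp_pos _)]
  simp_rw [habs] at hconv
  have hS : Tendsto (fun n => ∑ i, ∫ t in Icc a b, Real.exp (-(l * t)) * |Q n t i - q t i|)
      atTop (𝓝 0) := by
    have := tendsto_finsetSum Finset.univ fun i _ => (hconv i).2
    simpa using this
  intro i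
  have hFq := F_int hF hqi i
  have hri := rl_integrableOn (hα i) hFq
  have hgi := (gfun_integrableOn (a := a) (hα i) b).const_mul (qa i)
  have hdi : IntegrableOn (fun t => q t i - (qa i * gfun a (α i) t +
      rlInt a (α i) (fun τ => F (q τ) τ i) t)) (Icc a b) := (hqi i).sub (hgi.add hri)
  set R := ∫ t in Icc a b, Real.exp (-(l * t)) * |q t i - (qa i * gfun a (α i) t +
      rlInt a (α i) (fun τ => F (q τ) τ i) t)| with hR
  have hbound : ∀ n, R ≤ (∫ t in Icc a b, Real.exp (-(l * t)) * |Q (n + 1) t i - q t i|) +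
      1 / 2 * ∑ i, ∫ t in Icc a b, Real.exp (-(l * t)) * |Q n t i - q t i| := by
    intro n
    have h1 : ∫ t in Icc a b, Real.exp (-(l * t)) *
        |rlInt a (α i) (fun τ => F (Q n τ) τ i - F (q τ) τ i) t| ≤
        1 / 2 * ∑ i, ∫ t in Icc a b, Real.exp (-(l * t)) * |Q n t i - q t i| := by
      refine le_trans ?_ (hcon (Q n) q (hQi n) hqi)
      exact Finset.single_le_sum
        (f := fun i => ∫ t in Icc a b, Real.exp (-(l * t)) *
          |rlInt a (α i) (fun τ => F (Q n τ) τ i - F (q τ) τ i) t|)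
        (fun i _ => integral_nonneg fun t => by positivity) (Finset.mem_univ i)
    refine le_trans ?_ (add_le_add_right h1 _)
    have i1 : Integrable (fun t => Real.exp (-(l * t)) * |Q (n + 1) t i - q t i|)
      (volume.restrict (Icc a b)) := wexp_integrableOn l ((hQi (n + 1) i).sub (hqi i)).abs
    have i2 : Integrable (fun t => Real.exp (-(l * t)) *
        |rlInt a (α i) (fun τ => F (Q n τ) τ i - F (q τ) τ i) t|)
        (volume.restrict (Icc a b)) :=
      wexp_integrableOn l (rl_integrableOn (hα i) ((F_int hF (hQi n) i).sub hFq)).abs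
    rw [hR, ← integral_add i1 i2]
    apply integral_mono_ae (wexp_integrableOn l hdi.abs) (i1.add i2)
    filter_upwards [rl_sub (hα i).le (F_int hF (hQi n) i) hFq] with t ht
    rw [Pi.add_apply, ht, ← mul_add]
    apply mul_le_mul_of_nonneg_left _ (Real.exp_pos _).le
    have e := Qs_succ a α qa F n t i
    rw [← hQ] at e
    rw [abs_sub_comm (Q (n + 1) t i), e]
    refine le_trans (le_of_eq ?_) (abs_add_le _ _)
    congr 1
    ring
  have hRle : R ≤ 0 := by
    have h1 := ((hconv i).2.comp (tendsto_add_atTop_nat 1)).add (hS.const_mul (1 / 2))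
    simp only [mul_zero, add_zero] at h1
    exact ge_of_tendsto' h1 hbound
  have hR0 : R = 0 := le_antisymm hRle (integral_nonneg fun t => by positivity)
  have h0 := (integral_eq_zero_iff_of_nonneg (fun t => by positivity)
    (wexp_integrableOn l hdi.abs)).1 hR0
  filter_upwards [h0] with t ht
  simp only [Pi.zero_apply, mul_eq_zero, (Real.exp_pos _).ne', abs_eq_zero, false_or] at ht
  linarith

lemma uniq_local {a b L : ℝ} {m : ℕ}
    {F : EuclideanSpace ℝ (Fin m) → ℝ → EuclideanSpace ℝ (Fin m)} (hF : FH a b L F)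
    {α : Fin m → ℝ} (hα : ∀ i, 0 < α i) (hα1 : ∀ i, α i ≤ 1)
    (qa : EuclideanSpace ℝ (Fin m)) {q q' : ℝ → EuclideanSpace ℝ (Fin m)}
    (hq : ∀ i, IntegrableOn (fun t => q t i) (Icc a b))
    (hq' : ∀ i, IntegrableOn (fun t => q' t i) (Icc a b))
    (hs : ∀ i, ∀ᵐ t ∂(volume.restrict (Icc a b)), rlInt a (1 - α i) (fun τ => q τ i) t =
      qa i + rlInt a 1 (fun τ => F (q τ) τ i) t)
    (hs' : ∀ i, ∀ᵐ t ∂(volume.restrict (Icc a b)), rlInt a (1 - α i) (fun τ => q' τ i) t =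
      qa i + rlInt a 1 (fun τ => F (q' τ) τ i) t) :
    ∀ᵐ t ∂(volume.restrict (Icc a b)), q t = q' t := by
  have key : ∀ i, ∀ᵐ t ∂(volume.restrict (Icc a b)), q t i - q' t i =
      rlInt a (α i) (fun τ => F (q τ) τ i - F (q' τ) τ i) t := by
    intro i
    have hk := F_int hF hq i
    have hk' := F_int hF hq' i
    have hki : IntegrableOn (fun τ => F (q τ) τ i - F (q' τ) τ i) (Icc a b) := hk.sub hk'
    have hwi : IntegrableOn (fun τ => q τ i - q' τ i) (Icc a b) := (hq i).sub (hq' i)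
    have hri := rl_integrableOn (hα i) hki
    have h1 : ∀ᵐ t ∂(volume.restrict (Icc a b)),
        rlInt a (1 - α i) (fun τ => q τ i - q' τ i) t =
          rlInt a 1 (fun τ => F (q τ) τ i - F (q' τ) τ i) t := by
      filter_upwards [hs i, hs' i, rl_sub (sub_nonneg.2 (hα1 i)) (hq i) (hq' i),
        rl_sub zero_le_one hk hk'] with t e1 e2 e3 e4
      rw [e3, e4, e1, e2]
      ring
    have h2 := rl_congr_ae (hα i).le h1
    have h3 := rl_semigroup' (hα i).le (sub_nonneg.2 (hα1 i)) hwi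
    have h4 := rl_semigroup' (hα i).le zero_le_one hki
    have h5 := rl_semigroup' zero_le_one (hα i).le hki
    have h6 : ∀ᵐ t ∂(volume.restrict (Icc a b)), rlInt a 1 (fun s => (q s i - q' s i) -
        rlInt a (α i) (fun τ => F (q τ) τ i - F (q' τ) τ i) s) t = 0 := by
      filter_upwards [h2, h3, h4, h5, rl_sub zero_le_one hwi hri] with t e2 e3 e4 e5 e6
      rw [sub_add_cancel] at e3
      rw [add_comm] at e5
      rw [e6, ← e3, e2, e4, e5, sub_self]
    filter_upwards [rl_one_inj (hwi.sub hri) h6] with t ht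
    exact sub_eq_zero.1 ht
  obtain ⟨l, hl, hcon⟩ := contraction hF hα
  have hc := hcon q q' hq hq'
  have heq : ∀ i, (∫ t in Icc a b, Real.exp (-(l * t)) *
        |rlInt a (α i) (fun τ => F (q τ) τ i - F (q' τ) τ i) t|) =
      ∫ t in Icc a b, Real.exp (-(l * t)) * |q t i - q' t i| := by
    intro i
    apply integral_congr_ae
    filter_upwards [key i] with t ht
    rw [ht]
  simp_rw [heq] at hc
  have hnn : ∀ i ∈ Finset.univ, 0 ≤ ∫ t in Icc a b, Real.exp (-(l * t)) * |q t i - q' t i| :=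
    fun i _ => integral_nonneg fun t => by positivity
  have hz := (Finset.sum_eq_zero_iff_of_nonneg hnn).1
    (le_antisymm (by linarith) (Finset.sum_nonneg hnn))
  have hall : ∀ᵐ t ∂(volume.restrict (Icc a b)), ∀ i, q t i = q' t i := by
    rw [ae_all_iff]
    intro i
    have h0 := (integral_eq_zero_iff_of_nonneg (fun t => by positivity)
      (wexp_integrableOn l ((hq i).sub (hq' i)).abs)).1 (hz i (Finset.mem_univ i))
    filter_upwards [h0] with t ht
    simp only [Pi.sub_apply, Pi.zero_apply, mul_eq_zero, (Real.exp_pos _).ne', abs_eq_zero,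
      false_or] at ht
    linarith
  filter_upwards [hall] with t ht
  ext i
  exact ht i

theorem statement5 (a : ℝ) (If : Set ℝ)
    (haI : a ∈ If) (hIsub : If ⊆ Set.Ici a) (hIint : (interior If).Nonempty)
    (hIord : If.OrdConnected)
    (m : ℕ) (hm : 0 < m) (α : Fin m → ℝ) (hα : ∀ i, 0 < α i ∧ α i ≤ 1)
    (qa : EuclideanSpace ℝ (Fin m))
    (F : EuclideanSpace ℝ (Fin m) → ℝ → EuclideanSpace ℝ (Fin m))
    -- Carathéodory assumptions
    (hFmeas : ∀ x, MeasureTheory.AEStronglyMeasurable (fun t => F x t)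
      (MeasureTheory.volume.restrict If))
    (hFcont : ∀ᵐ t ∂(MeasureTheory.volume.restrict If), Continuous fun x => F x t)
    -- `F(0,·)` is locally integrable on `If`
    (hzero : ∀ b ∈ If, MeasureTheory.IntegrableOn (fun t => F 0 t) (Set.Icc a b))
    -- `F` is globally Lipschitz continuous in its first variable
    (hlip : ∀ c ∈ If, ∀ d ∈ If, c ≤ d → ∃ L : ℝ, 0 ≤ L ∧
      ∀ x₁ x₂ : EuclideanSpace ℝ (Fin m),
        ∀ᵐ t ∂(MeasureTheory.volume.restrict (Set.Icc c d)),
          ‖F x₂ t - F x₁ t‖ ≤ L * ‖x₂ - x₁‖) :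
    (∃ q : ℝ → EuclideanSpace ℝ (Fin m), IsRLSolution a If α qa F q) ∧
    ∀ q q' : ℝ → EuclideanSpace ℝ (Fin m),
      IsRLSolution a If α qa F q → IsRLSolution a If α qa F q' →
      ∀ᵐ t ∂(MeasureTheory.volume.restrict If), q t = q' t := by
  have hα0 : ∀ i, 0 < α i := fun i => (hα i).1
  have hα1 : ∀ i, α i ≤ 1 := fun i => (hα i).2
  have hsub : ∀ b ∈ If, Icc a b ⊆ If := fun b hb => hIord.out haI hb
  have hFH : ∀ b ∈ If, ∃ L, FH a b L F := by
    intro b hb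
    obtain ⟨L, hL, h⟩ := hlip a haI b hb (hIsub hb)
    exact ⟨L, hL, lip_ae (ae_restrict_of_ae_restrict_of_subset (hsub b hb) hFcont) h,
      fun x => (hFmeas x).mono_measure (Measure.restrict_mono_set _ (hsub b hb)), hzero b hb⟩
  constructor
  · refine ⟨qlim a α qa F, ?_, ?_⟩
    · intro i b hb
      obtain ⟨L, hF⟩ := hFH b hb
      exact (exist_local hF hα0 qa).1 i
    · intro i
      refine ⟨fun τ => F (qlim a α qa F τ) τ i, ?_, ?_, Eventually.of_forall fun t => rfl⟩
      · intro b hb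
        obtain ⟨L, hF⟩ := hFH b hb
        exact F_int hF (exist_local hF hα0 qa).1 i
      · apply ae_If haI hIsub hIord
        intro b hb
        obtain ⟨L, hF⟩ := hFH b hb
        obtain ⟨hi, he⟩ := exist_local hF hα0 qa
        have hk := F_int hF hi i
        have h0 : 0 ≤ 1 - α i := sub_nonneg.2 (hα1 i)
        have hne : ∀ᵐ t ∂(volume.restrict (Icc a b)), t ≠ a :=
          ae_restrict_of_ae (Measure.ae_ne volume a)
        filter_upwards [rl_congr_ae h0 (he i),
          rl_add h0 ((gfun_integrableOn (hα0 i) b).const_mul (qa i))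
            (rl_integrableOn (hα0 i) hk), rl_semigroup' h0 (hα0 i).le hk,
          ae_restrict_mem measurableSet_Icc, hne] with t e1 e2 e3 ht hta
        rw [e1, e2, rl_const_mul, rl_gfun (hα0 i) (hα1 i) (lt_of_le_of_ne ht.1 hta.symm), e3,
          add_sub_cancel, rl_one, mul_one]
  · intro q q' hq hq'
    apply ae_If haI hIsub hIord
    intro b hb
    obtain ⟨L, hF⟩ := hFH b hb
    have aux : ∀ p : ℝ → EuclideanSpace ℝ (Fin m), IsRLSolution a If α qa F p → ∀ i,
        ∀ᵐ t ∂(volume.restrict (Icc a b)), rlInt a (1 - α i) (fun τ => p τ i) t =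
          qa i + rlInt a 1 (fun τ => F (p τ) τ i) t := by
      intro p hp i
      obtain ⟨h, _, h2, h3⟩ := hp.2 i
      have h2' := ae_restrict_of_ae_restrict_of_subset (hsub b hb) h2
      have h3' := ae_restrict_of_ae_restrict_of_subset (hsub b hb) h3
      filter_upwards [h2', ae_restrict_mem measurableSet_Icc] with t e2 ht
      rw [e2, ← rl_one, rl_congr one_pos h3' ht]
    exact uniq_local hF hα0 hα1 qa (fun i => hq.1 i b hb) (fun i => hq'.1 i b hb)
      (aux q hq) (aux q' hq')
end

section
/- Let a ∈ ℝ, let I_f be an interval with least element a, nonempty interior, and I_f ⊂ [a,∞), let Ω ⊂ ℝ^m be a nonempty open set, let α = (α₁,…,α_m) ∈ (0,1]^m, let q_a ∈ Ω, and let f : Ω × I_f → ℝ^m be a Carathéodory function that is bounded on compacts: for every compact K ⊂ Ω and every compact subinterval [c,d] ⊂ I_f there exists M ≥ 0 with |f(x,t)| ≤ M for all x ∈ K and almost every t ∈ [c,d]. Then a couple (q,I) is a local solution of the Caputo Cauchy problem ( _cD^{α_i}_{a+}[q_i] = f_i(q(·),·) a.e. on I, q(a) = q_a ) if and only if I ⊂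 I_f is an interval with least element a and nonempty interior, q : I → Ω is continuous, and for every t ∈ I and every i ∈ {1,…,m}, q_i(t) = (q_a)_i + (1/Γ(α_i)) ∫_a^t (t−τ)^{α_i−1} f_i(q(τ),τ) dτ. -/
open MeasureTheory Set

/-- `I` is an interval with least element `a`, nonempty interior, and `I ⊆ [a,∞)`. -/
def IsIntervalFrom (a : ℝ) (I : Set ℝ) : Prop :=
  a ∈ I ∧ I ⊆ Set.Ici a ∧ (interior I).Nonempty ∧ I.OrdConnected

/-- `(q, I)` is a local solution of the Caputo Cauchy problem
`_cD^{α_i}_{a+}[q_i] = F_i(q(·),·)` a.e., `q(a) = qa`, on the domain `Ω`: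
`I ⊆ If` is an interval with least element `a` and nonempty interior, `q` is continuous
on `I` with values in `Ω` and `q(a) = qa`, and for each `i` the function
`I^{1-α_i}_{a+}[q_i - (qa)_i]` agrees a.e. on `I` with a locally absolutely continuous
function `t ↦ c + ∫_a^t h` whose derivative `h` (the Caputo fractional derivative of
`q_i`) equals `F_i(q(t), t)` for almost every `t ∈ I`. -/
def IsCaputoLocalSol (a : ℝ) (If : Set ℝ) {m : ℕ}
    (Ω : Set (EuclideanSpace ℝ (Fin m))) (α : Fin m → ℝ)
    (qa : EuclideanSpace ℝ (Fin m))
    (F : EuclideanSpace ℝ (Fin m) → ℝ → EuclideanSpace ℝ (Fin m))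
    (q : ℝ → EuclideanSpace ℝ (Fin m)) (I : Set ℝ) : Prop :=
  IsIntervalFrom a I ∧ I ⊆ If ∧ ContinuousOn q I ∧ (∀ t ∈ I, q t ∈ Ω) ∧ q a = qa ∧
  ∀ i, ∃ c : ℝ, ∃ h : ℝ → ℝ,
    (∀ b ∈ I, MeasureTheory.IntegrableOn h (Set.Icc a b)) ∧
    (∀ᵐ t ∂(MeasureTheory.volume.restrict I),
      rlInt a (1 - α i) (fun τ => q τ i - qa i) t = c + ∫ τ in a..t, h τ) ∧
    (∀ᵐ t ∂(MeasureTheory.volume.restrict I), h t = F (q t) t i)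

/-- `(q, I)` is a maximal local solution of the Caputo Cauchy problem:
every extension `(q', I')` of it satisfies `I' = I`. -/
def IsMaximalSol (a : ℝ) (If : Set ℝ) {m : ℕ}
    (Ω : Set (EuclideanSpace ℝ (Fin m))) (α : Fin m → ℝ)
    (qa : EuclideanSpace ℝ (Fin m))
    (F : EuclideanSpace ℝ (Fin m) → ℝ → EuclideanSpace ℝ (Fin m))
    (q : ℝ → EuclideanSpace ℝ (Fin m)) (I : Set ℝ) : Prop :=
  IsCaputoLocalSol a If Ω α qa F q I ∧
  ∀ (q' : ℝ → EuclideanSpace ℝ (Fin m)) (I' : Set ℝ),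
    IsCaputoLocalSol a If Ω α qa F q' I' → I ⊆ I' → Set.EqOn q' q I → I' = I

lemma beta_aux {α β τ t : ℝ} (hα : 0 < α) (hβ : 0 < β) (hab : α + β = 1) (h : τ < t) :
    ∫ s in τ..t, (t - s) ^ (β - 1) * (s - τ) ^ (α - 1) = Real.Gamma α * Real.Gamma β := by
  have h1 := Complex.betaIntegral_scaled (α : ℂ) (β : ℂ) (sub_pos.2 h)
  have h2 := Complex.Gamma_mul_Gamma_eq_betaIntegral (s := (α : ℂ)) (t := (β : ℂ))
    (by simpa using hα) (by simpa using hβ)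
  have hab' : (α : ℂ) + β = 1 := by exact_mod_cast hab
  rw [hab'] at h1 h2
  simp only [sub_self, Complex.cpow_zero, one_mul, Complex.Gamma_one] at h1 h2
  rw [← h2, Complex.Gamma_ofReal, Complex.Gamma_ofReal] at h1
  have h3 : ∫ s in τ..t, (t - s) ^ (β - 1) * (s - τ) ^ (α - 1)
      = ∫ x in (0:ℝ)..(t - τ), x ^ (α - 1) * (t - τ - x) ^ (β - 1) := by
    have := intervalIntegral.integral_comp_sub_right (a := τ) (b := t)
      (fun x => x ^ (α - 1) * (t - τ - x) ^ (β - 1)) τ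
    rw [sub_self] at this
    rw [← this]
    congr 1
    ext s
    rw [mul_comm]
    congr 2
    ring
  rw [h3]
  have h4 : ∫ x in (0:ℝ)..(t - τ), (x:ℂ) ^ ((α:ℂ) - 1) * (((t - τ : ℝ) : ℂ) - x) ^ ((β:ℂ) - 1)
      = ∫ x in (0:ℝ)..(t - τ), ((x ^ (α - 1) * (t - τ - x) ^ (β - 1) : ℝ) : ℂ) := by
    apply intervalIntegral.integral_congr
    intro x hx
    rw [uIcc_of_le (sub_pos.2 h).le] at hx
    simp only
    rw [Complex.ofReal_mul, Complex.ofReal_cpow hx.1, Complex.ofReal_cpow (sub_nonneg.2 hx.2)]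
    push_cast
    rfl
  rw [h4, intervalIntegral.integral_ofReal] at h1
  exact_mod_cast h1

lemma beta_int {α β τ t : ℝ} (hα : 0 < α) (hβ : 0 < β) (hab : α + β = 1) (h : τ < t) :
    IntegrableOn (fun s => (t - s) ^ (β - 1) * (s - τ) ^ (α - 1)) (Ioc τ t) := by
  have : IntervalIntegrable (fun s => (t - s) ^ (β - 1) * (s - τ) ^ (α - 1)) volume τ t := by
    apply intervalIntegral.intervalIntegrable_of_integral_ne_zero
    rw [beta_aux hα hβ hab h]
    exact (mul_pos (Real.Gamma_pos_of_pos hα) (Real.Gamma_pos_of_pos hβ)).ne'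
  rwa [intervalIntegrable_iff_integrableOn_Ioc_of_le h.le] at this

lemma semigroup {α β a t : ℝ} (hα : 0 < α) (hβ : 0 < β) (hab : α + β = 1) (hat : a ≤ t)
    {w : ℝ → ℝ} (hw : IntegrableOn w (Icc a t)) :
    ∫ s in a..t, (t - s) ^ (β - 1) * (∫ τ in a..s, (s - τ) ^ (α - 1) * w τ)
      = Real.Gamma α * Real.Gamma β * ∫ τ in a..t, w τ := by
  set μ := volume.restrict (Ioc a t) with hμ
  set C := Real.Gamma α * Real.Gamma β with hC
  have hCpos : 0 < C := (mul_pos (Real.Gamma_pos_of_pos hα) (Real.Gamma_pos_of_pos hβ))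
  have hwI : Integrable w μ := hw.mono_set Ioc_subset_Icc_self
  let k : ℝ → ℝ → ℝ := fun s τ =>
    (Ioi τ).indicator (fun s => (t - s) ^ (β - 1) * (s - τ) ^ (α - 1)) s * w τ
  -- measurability
  have hmeas : AEStronglyMeasurable (Function.uncurry k) (μ.prod μ) := by
    apply AEStronglyMeasurable.mul
    · have : (fun p : ℝ × ℝ => (Ioi p.2).indicator
          (fun s => (t - s) ^ (β - 1) * (s - p.2) ^ (α - 1)) p.1)
          = ({p : ℝ × ℝ | p.2 < p.1}).indicator
            (fun p => (t - p.1) ^ (β - 1) * (p.1 - p.2) ^ (α - 1)) := by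
        ext p
        simp [indicator]
      rw [this]
      apply Measurable.aestronglyMeasurable
      apply Measurable.indicator
      · fun_prop
      · exact measurableSet_lt measurable_snd measurable_fst
    · exact hwI.aestronglyMeasurable.comp_snd
  have hset : ∀ τ ∈ Ioc a t, Ioi τ ∩ Ioc a t = Ioc τ t := by
    intro τ hτ
    ext x
    simp only [mem_inter_iff, mem_Ioi, mem_Ioc]
    constructor
    · rintro ⟨h1, h2, h3⟩; exact ⟨h1, h3⟩
    · rintro ⟨h1, h3⟩; exact ⟨h1, hτ.1.trans h1, h3⟩
  have hne : ∀ᵐ τ ∂μ, τ ∈ Ioo a t := by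
    rw [hμ, ← restrict_Ioo_eq_restrict_Ioc]
    exact ae_restrict_mem measurableSet_Ioo
  have hinner : ∀ τ ∈ Ioo a t, Integrable
      (fun s => (Ioi τ).indicator (fun s => (t - s) ^ (β - 1) * (s - τ) ^ (α - 1)) s) μ := by
    intro τ hτ
    rw [integrable_indicator_iff measurableSet_Ioi, hμ, IntegrableOn,
      Measure.restrict_restrict measurableSet_Ioi, hset τ ⟨hτ.1, hτ.2.le⟩]
    exact beta_int hα hβ hab hτ.2
  have hinnerval : ∀ τ ∈ Ioo a t,
      ∫ s, (Ioi τ).indicator (fun s => (t - s) ^ (β - 1) * (s - τ) ^ (α - 1)) s ∂μ = C := by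
    intro τ hτ
    rw [integral_indicator measurableSet_Ioi, hμ,
      Measure.restrict_restrict measurableSet_Ioi, hset τ ⟨hτ.1, hτ.2.le⟩,
      ← intervalIntegral.integral_of_le hτ.2.le]
    exact beta_aux hα hβ hab hτ.2
  have hint : Integrable (Function.uncurry k) (μ.prod μ) := by
    rw [integrable_prod_iff' hmeas]
    constructor
    · filter_upwards [hne] with τ hτ
      exact (hinner τ hτ).mul_const (w τ)
    · refine (hwI.norm.const_mul C).congr ?_
      filter_upwards [hne] with τ hτ
      simp only [Function.uncurry, k, norm_mul]
      rw [integral_mul_const, ← hinnerval τ hτ]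
      congr 1
      apply integral_congr_ae
      filter_upwards [ae_restrict_mem measurableSet_Ioc] with s hs
      rw [Real.norm_of_nonneg]
      refine indicator_apply_nonneg fun hx => ?_
      exact mul_nonneg (Real.rpow_nonneg (sub_nonneg.2 hs.2) _)
        (Real.rpow_nonneg (sub_nonneg.2 (le_of_lt hx)) _)
  have hswap := integral_integral_swap hint
  have hR : ∫ τ, ∫ s, k s τ ∂μ ∂μ = C * ∫ τ in a..t, w τ := by
    rw [intervalIntegral.integral_of_le hat, ← integral_const_mul]
    apply integral_congr_ae
    filter_upwards [hne] with τ hτ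
    simp only [k]
    rw [integral_mul_const, hinnerval τ hτ]
  rw [← hR, ← hswap, intervalIntegral.integral_of_le hat]
  apply integral_congr_ae
  filter_upwards [hne] with s hs
  rw [← intervalIntegral.integral_const_mul, intervalIntegral.integral_of_le hs.1.le,
    integral_Ioc_eq_integral_Ioo]
  have : ∀ τ, k s τ = (Iio s).indicator
      (fun τ => (t - s) ^ (β - 1) * ((s - τ) ^ (α - 1) * w τ)) τ := by
    intro τ
    simp only [k, indicator, mem_Ioi, mem_Iio]
    split_ifs <;> ring
  simp_rw [this]
  rw [integral_indicator measurableSet_Iio, hμ, Measure.restrict_restrict measurableSet_Iio]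
  congr 2
  ext x
  simp only [mem_inter_iff, mem_Iio, mem_Ioc, mem_Ioo]
  constructor
  · rintro ⟨h1, h2⟩; exact ⟨h2, h1, h2.le.trans hs.2.le⟩
  · rintro ⟨h1, h2, h3⟩; exact ⟨h2, h1⟩

/-- kernel integrability -/
lemma ker_int {α s x y : ℝ} (hα : 0 < α) :
    IntervalIntegrable (fun τ => (s - τ) ^ (α - 1)) volume x y := by
  have := (intervalIntegral.intervalIntegrable_rpow' (a := s - x) (b := s - y) (r := α - 1)
    (by linarith)).comp_sub_left s
  simpa using this

lemma ker_val {α s x y : ℝ} (hα : 0 < α) :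
    ∫ τ in x..y, (s - τ) ^ (α - 1) = ((s - x) ^ α - (s - y) ^ α) / α := by
  rw [intervalIntegral.integral_comp_sub_left (fun r => r ^ (α - 1)) s,
    integral_rpow (Or.inl (by linarith))]
  simp

lemma ker_mul_int {α s x y M : ℝ} (hα : 0 < α) (hxy : x ≤ y) {w : ℝ → ℝ}
    (hm : AEStronglyMeasurable w (volume.restrict (Icc x y)))
    (hb : ∀ᵐ τ ∂(volume.restrict (Icc x y)), |w τ| ≤ M) :
    IntervalIntegrable (fun τ => (s - τ) ^ (α - 1) * w τ) volume x y := by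
  have h := ker_int (s := s) (x := x) (y := y) hα
  rw [intervalIntegrable_iff_integrableOn_Icc_of_le hxy] at h ⊢
  exact Integrable.mul_bdd (c := M) h hm (by simpa using hb)

lemma holder {α a b M : ℝ} (hα : 0 < α) (hα1 : α ≤ 1) {w : ℝ → ℝ}
    (hm : AEStronglyMeasurable w (volume.restrict (Icc a b)))
    (hM : 0 ≤ M) (hb : ∀ᵐ τ ∂(volume.restrict (Icc a b)), |w τ| ≤ M)
    {x y : ℝ} (hax : a ≤ x) (hxy : x ≤ y) (hyb : y ≤ b) :
    |(∫ τ in a..y, (y - τ) ^ (α - 1) * w τ) - ∫ τ in a..x, (x - τ) ^ (α - 1) * w τ|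
      ≤ 2 * M / α * (y - x) ^ α := by
  have sub : ∀ {c d : ℝ}, a ≤ c → d ≤ b → Icc c d ⊆ Icc a b := fun h1 h2 => Icc_subset_Icc h1 h2
  have mI : ∀ {c d s : ℝ}, a ≤ c → d ≤ b → c ≤ d →
      IntervalIntegrable (fun τ => (s - τ) ^ (α - 1) * w τ) volume c d := fun h1 h2 h3 =>
    ker_mul_int hα h3 (hm.mono_measure (Measure.restrict_mono (sub h1 h2) le_rfl))
      (ae_restrict_of_ae_restrict_of_subset (sub h1 h2) hb)
  rw [← intervalIntegral.integral_add_adjacent_intervals (mI le_rfl (hxy.trans hyb) hax)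
    (mI hax hyb hxy), add_sub_right_comm,
    ← intervalIntegral.integral_sub (mI le_rfl (hxy.trans hyb) hax)
      (mI le_rfl (hxy.trans hyb) hax)]
  have e1 : |∫ τ in a..x, ((y - τ) ^ (α - 1) * w τ - (x - τ) ^ (α - 1) * w τ)|
      ≤ ∫ τ in a..x, M * ((x - τ) ^ (α - 1) - (y - τ) ^ (α - 1)) := by
    rw [← Real.norm_eq_abs]
    apply intervalIntegral.norm_integral_le_of_norm_le hax
    · have h1 := ae_restrict_of_ae_restrict_of_subset (sub le_rfl (hxy.trans hyb)) hb
      have h2 := (ae_restrict_iff' measurableSet_Icc).1 h1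
      have h3 : ∀ᵐ τ : ℝ, τ ≠ x := by simp [ae_iff, measure_singleton]
      filter_upwards [h2, h3] with τ hτ hne hmem
      have hlt : τ < x := lt_of_le_of_ne hmem.2 hne
      have hle : (y - τ) ^ (α - 1) ≤ (x - τ) ^ (α - 1) :=
        Real.rpow_le_rpow_of_nonpos (by linarith) (by linarith) (by linarith)
      rw [← sub_mul, norm_mul, Real.norm_eq_abs, Real.norm_eq_abs, abs_of_nonpos (by linarith),
        mul_comm, neg_sub]
      exact mul_le_mul_of_nonneg_right (hτ ⟨hmem.1.le, hmem.2⟩) (by linarith)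
    · exact ((ker_int hα).sub (ker_int hα)).const_mul _
  have e2 : |∫ τ in x..y, (y - τ) ^ (α - 1) * w τ| ≤ ∫ τ in x..y, M * (y - τ) ^ (α - 1) := by
    rw [← Real.norm_eq_abs]
    apply intervalIntegral.norm_integral_le_of_norm_le hxy
    · have h1 := ae_restrict_of_ae_restrict_of_subset (sub hax hyb) hb
      have h2 := (ae_restrict_iff' measurableSet_Icc).1 h1
      filter_upwards [h2] with τ hτ hmem
      have h0 : 0 ≤ (y - τ) ^ (α - 1) := Real.rpow_nonneg (by linarith [hmem.2]) _
      rw [norm_mul, Real.norm_eq_abs, Real.norm_eq_abs, abs_of_nonneg h0, mul_comm]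
      exact mul_le_mul_of_nonneg_right (hτ ⟨hmem.1.le, hmem.2⟩) h0
    · exact (ker_int hα).const_mul _
  rw [intervalIntegral.integral_const_mul, intervalIntegral.integral_sub (ker_int hα) (ker_int hα),
    ker_val hα, ker_val hα] at e1
  rw [intervalIntegral.integral_const_mul, ker_val hα] at e2
  rw [sub_self, Real.zero_rpow hα.ne'] at e1 e2
  refine (abs_add_le _ _).trans ((add_le_add e1 e2).trans ?_)
  have h5 : (x - a) ^ α ≤ (y - a) ^ α := Real.rpow_le_rpow (by linarith) (by linarith) hα.le
  have h6 : 2 * M / α * (y - x) ^ α - (M * (((x - a) ^ α - 0) / α - ((y - a) ^ α - (y - x) ^ α) / α)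
      + M * (((y - x) ^ α - 0) / α)) = M / α * ((y - a) ^ α - (x - a) ^ α) := by
    field_simp; ring
  have h7 : 0 ≤ M / α * ((y - a) ^ α - (x - a) ^ α) :=
    mul_nonneg (div_nonneg hM hα.le) (by linarith)
  linarith

lemma J_cont {α a b M : ℝ} (hα : 0 < α) (hα1 : α ≤ 1) {w : ℝ → ℝ}
    (hm : AEStronglyMeasurable w (volume.restrict (Icc a b)))
    (hM : 0 ≤ M) (hb : ∀ᵐ τ ∂(volume.restrict (Icc a b)), |w τ| ≤ M) :
    ContinuousOn (fun s => ∫ τ in a..s, (s - τ) ^ (α - 1) * w τ) (Icc a b) := by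
  have key : ∀ x ∈ Icc a b, ∀ y ∈ Icc a b,
      |(∫ τ in a..y, (y - τ) ^ (α - 1) * w τ) - ∫ τ in a..x, (x - τ) ^ (α - 1) * w τ|
      ≤ 2 * M / α * |y - x| ^ α := by
    intro x hx y hy
    rcases le_total x y with h | h
    · rw [abs_of_nonneg (sub_nonneg.2 h)]
      exact holder hα hα1 hm hM hb hx.1 h hy.2
    · rw [abs_sub_comm, abs_sub_comm y x, abs_of_nonneg (sub_nonneg.2 h)]
      exact holder hα hα1 hm hM hb hy.1 h hx.2
  intro x hx
  rw [ContinuousWithinAt, tendsto_iff_dist_tendsto_zero]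
  have hlim : Filter.Tendsto (fun y => 2 * M / α * |y - x| ^ α) (nhdsWithin x (Icc a b))
      (nhds 0) := by
    have hc : Continuous (fun y => 2 * M / α * |y - x| ^ α) := by
      refine continuous_const.mul ?_
      exact (continuous_abs.comp (continuous_id.sub continuous_const)).rpow_const
        (fun _ => Or.inr hα.le)
    have := (hc.tendsto x).mono_left (nhdsWithin_le_nhds (s := Icc a b))
    simpa [Real.zero_rpow hα.ne'] using this
  refine squeeze_zero' (Filter.Eventually.of_forall fun _ => dist_nonneg) ?_ hlim
  filter_upwards [self_mem_nhdsWithin] with y hy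
  rw [Real.dist_eq]
  exact key x hx y hy

lemma bwd1 {α a t : ℝ} (hα : 0 < α) (hα1 : α ≤ 1) (hat : a ≤ t) {u h : ℝ → ℝ}
    (hh : IntegrableOn h (Icc a t))
    (hu : ∀ s ∈ Icc a t, u s = (1 / Real.Gamma α) * ∫ τ in a..s, (s - τ) ^ (α - 1) * h τ) :
    rlInt a (1 - α) u t = ∫ τ in a..t, h τ := by
  unfold rlInt
  split_ifs with h0
  · have : α = 1 := by linarith
    subst this
    rw [hu t ⟨hat, le_rfl⟩]
    simp
  · have hβ : 0 < 1 - α := lt_of_le_of_ne (by linarith) (Ne.symm h0)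
    have hsg := semigroup hα hβ (by ring) hat hh
    have hGa := (Real.Gamma_pos_of_pos hα).ne'
    have hGb := (Real.Gamma_pos_of_pos hβ).ne'
    have : ∫ τ in a..t, (t - τ) ^ (1 - α - 1) * u τ
        = (1 / Real.Gamma α) *
          ∫ s in a..t, (t - s) ^ (1 - α - 1) * (∫ τ in a..s, (s - τ) ^ (α - 1) * h τ) := by
      rw [← intervalIntegral.integral_const_mul]
      apply intervalIntegral.integral_congr
      intro s hs
      rw [uIcc_of_le hat] at hs
      simp only
      rw [hu s hs]
      ring
    rw [this, hsg]
    field_simp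

lemma eq_of_integral_eq {a b : ℝ} (hab : a < b) {u v : ℝ → ℝ}
    (hu : ContinuousOn u (Icc a b)) (hv : ContinuousOn v (Icc a b))
    (h : ∀ s ∈ Icc a b, ∫ τ in a..s, u τ = ∫ τ in a..s, v τ) : u b = v b := by
  have key : ∀ {w : ℝ → ℝ}, ContinuousOn w (Icc a b) →
      HasDerivWithinAt (fun s => ∫ τ in a..s, w τ) (w b) (Icc a b) b := by
    intro w hw
    have : Fact (b ∈ Icc a b) := ⟨⟨hab.le, le_rfl⟩⟩
    apply intervalIntegral.integral_hasDerivWithinAt_right (t := Icc a b)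
    · exact hw.intervalIntegrable_of_Icc hab.le
    · exact hw.stronglyMeasurableAtFilter_nhdsWithin measurableSet_Icc b
    · exact hw b ⟨hab.le, le_rfl⟩
  have h1 := key hu
  have h2 := (key hv).congr (fun s hs => h s hs) (h b ⟨hab.le, le_rfl⟩)
  exact (uniqueDiffOn_Icc hab b ⟨hab.le, le_rfl⟩).eq_deriv _ h1 h2

lemma cont_facts {a b : ℝ} {u : ℝ → ℝ} (hu : ContinuousOn u (Icc a b)) :
    AEStronglyMeasurable u (volume.restrict (Icc a b)) ∧ ∃ M : ℝ, 0 ≤ M ∧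
      ∀ᵐ τ ∂(volume.restrict (Icc a b)), |u τ| ≤ M := by
  refine ⟨hu.aestronglyMeasurable measurableSet_Icc, ?_⟩
  obtain ⟨M, hM⟩ := isCompact_Icc.exists_bound_of_continuousOn hu
  refine ⟨max M 0, le_max_right _ _, ?_⟩
  filter_upwards [ae_restrict_mem measurableSet_Icc] with τ hτ
  exact (hM τ hτ).trans (le_max_left _ _)

lemma fwd1 {α a b M c : ℝ} (hα : 0 < α) (hα1 : α ≤ 1) (hab : a < b) {u h : ℝ → ℝ}
    (hu : ContinuousOn u (Icc a b)) (hua : u a = 0)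
    (hh : IntegrableOn h (Icc a b)) (hM : 0 ≤ M)
    (hb : ∀ᵐ τ ∂(volume.restrict (Icc a b)), |h τ| ≤ M)
    (heq : ∀ᵐ t ∂(volume.restrict (Icc a b)), rlInt a (1 - α) u t = c + ∫ τ in a..t, h τ) :
    u b = (1 / Real.Gamma α) * ∫ τ in a..b, (b - τ) ^ (α - 1) * h τ := by
  have hcontR : ContinuousOn (fun t => c + ∫ τ in a..t, h τ) (Icc a b) :=
    continuousOn_const.add (intervalIntegral.continuousOn_primitive_interval
      (by rwa [uIcc_of_le hab.le]) |>.mono (by rw [uIcc_of_le hab.le]))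
  have hbm : b ∈ Icc a b := ⟨hab.le, le_rfl⟩
  have ham : a ∈ Icc a b := ⟨le_rfl, hab.le⟩
  obtain ⟨hum, Mu, hMu, hub⟩ := cont_facts hu
  by_cases h0 : 1 - α = 0
  · have : α = 1 := by linarith
    subst this
    have hE := Measure.eqOn_Icc_of_ae_eq volume hab.ne heq (hu.congr fun t _ => by simp [rlInt]) hcontR
    have h1 := hE ham
    have h2 := hE hbm
    simp [rlInt, hua] at h1 h2
    simp [h2, ← h1]
  · have hβ : 0 < 1 - α := lt_of_le_of_ne (by linarith) (Ne.symm h0)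
    have hGa := (Real.Gamma_pos_of_pos hα).ne'
    have hGb := (Real.Gamma_pos_of_pos hβ).ne'
    have hcL : ContinuousOn (rlInt a (1 - α) u) (Icc a b) := by
      have : rlInt a (1 - α) u = fun t => (1 / Real.Gamma (1 - α)) *
          ∫ τ in a..t, (t - τ) ^ (1 - α - 1) * u τ := by
        ext t; simp [rlInt, h0]
      rw [this]
      exact continuousOn_const.mul (J_cont hβ (by linarith) hum hMu hub)
    have hE := Measure.eqOn_Icc_of_ae_eq volume hab.ne heq hcL hcontR
    have hc : c = 0 := by
      have := hE ham
      simp [rlInt, h0] at this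
      exact this.symm
    subst hc
    set v : ℝ → ℝ := fun s => (1 / Real.Gamma α) * ∫ τ in a..s, (s - τ) ^ (α - 1) * h τ with hv
    have hvc : ContinuousOn v (Icc a b) :=
      continuousOn_const.mul (J_cont hα hα1 hh.aestronglyMeasurable hM hb)
    have hrl : ∀ s ∈ Icc a b, rlInt a (1 - α) u s = rlInt a (1 - α) v s := by
      intro s hs
      rw [hE hs, bwd1 hα hα1 hs.1 (hh.mono_set (Icc_subset_Icc_right hs.2)) (fun _ _ => rfl)]
      simp
    have hJ : ∀ s ∈ Icc a b, ∫ τ in a..s, (s - τ) ^ (1 - α - 1) * u τ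
        = ∫ τ in a..s, (s - τ) ^ (1 - α - 1) * v τ := by
      intro s hs
      have := hrl s hs
      simp only [rlInt, h0, if_false] at this
      exact mul_left_cancel₀ (one_div_ne_zero hGb) this
    refine eq_of_integral_eq hab hu hvc fun s hs => ?_
    have iu := semigroup hβ hα (by ring) hs.1
      ((hu.integrableOn_Icc).mono_set (Icc_subset_Icc_right hs.2))
    have iv := semigroup hβ hα (by ring) hs.1
      ((hvc.integrableOn_Icc).mono_set (Icc_subset_Icc_right hs.2))
    have : ∫ r in a..s, (s - r) ^ (α - 1) * (∫ τ in a..r, (r - τ) ^ (1 - α - 1) * u τ)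
        = ∫ r in a..s, (s - r) ^ (α - 1) * (∫ τ in a..r, (r - τ) ^ (1 - α - 1) * v τ) := by
      apply intervalIntegral.integral_congr
      intro r hr
      rw [uIcc_of_le hs.1] at hr
      simp only
      rw [hJ r ⟨hr.1, hr.2.trans hs.2⟩]
    rw [iu, iv] at this
    exact mul_left_cancel₀ (mul_ne_zero hGb hGa) this

lemma comp_facts {E : Type*} [NormedAddCommGroup E] [MeasurableSpace E] [BorelSpace E]
    [SecondCountableTopology E] {a b : ℝ} (hab : a ≤ b) {Ω : Set E} {F : E → ℝ → E} {q : ℝ → E}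
    (hFmeas : ∀ x ∈ Ω, AEStronglyMeasurable (fun t => F x t) (volume.restrict (Icc a b)))
    (hFcont : ∀ᵐ t ∂(volume.restrict (Icc a b)), ContinuousOn (fun x => F x t) Ω)
    (hbdd : ∀ K : Set E, K ⊆ Ω → IsCompact K → ∃ M : ℝ, 0 ≤ M ∧ ∀ x ∈ K,
        ∀ᵐ t ∂(volume.restrict (Icc a b)), ‖F x t‖ ≤ M)
    (hq : ContinuousOn q (Icc a b)) (hqΩ : ∀ t ∈ Icc a b, q t ∈ Ω) :
    AEStronglyMeasurable (fun t => F (q t) t) (volume.restrict (Icc a b)) ∧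
    ∃ M : ℝ, 0 ≤ M ∧ ∀ᵐ t ∂(volume.restrict (Icc a b)), ‖F (q t) t‖ ≤ M := by
  have ham : a ∈ Icc a b := ⟨le_rfl, hab⟩
  constructor
  · let q' : ℝ → E := fun t => q (projIcc a b hab t)
    have hq'c : Continuous q' := by
      have := continuousOn_iff_continuous_domRestrict.1 hq
      exact this.comp continuous_projIcc
    have hq'eq : ∀ t ∈ Icc a b, q' t = q t := by
      intro t ht
      simp [q', projIcc_of_mem hab ht]
    have hq'Ω : ∀ t, q' t ∈ Ω := fun t => hqΩ _ (projIcc a b hab t).2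
    let S : ℕ → SimpleFunc ℝ E := fun n =>
      SimpleFunc.approxOn q' hq'c.measurable Ω (q a) (hqΩ a ham) n
    have hSmem : ∀ n t, S n t ∈ Ω := fun n t => SimpleFunc.approxOn_mem _ _ n t
    have hSlim : ∀ t, Filter.Tendsto (fun n => S n t) Filter.atTop (nhds (q' t)) := fun t =>
      SimpleFunc.tendsto_approxOn _ _ (subset_closure (hq'Ω t))
    have hSmeas : ∀ n, AEStronglyMeasurable (fun t => F (S n t) t)
        (volume.restrict (Icc a b)) := by
      intro n
      have : (fun t => F (S n t) t) = fun t => ∑ y ∈ (S n).range,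
          ((S n) ⁻¹' {y}).indicator (F y) t := by
        ext t
        rw [Finset.sum_eq_single (S n t)]
        · simp
        · intro y _ hy
          exact indicator_of_notMem (fun h => hy (by simpa using h.symm)) _
        · intro h
          exact absurd (SimpleFunc.mem_range_self _ _) h
      rw [this]
      refine Finset.aestronglyMeasurable_fun_sum _ fun y hy => ?_
      obtain ⟨t, rfl⟩ := SimpleFunc.mem_range.1 hy
      exact (hFmeas _ (hSmem n t)).indicator ((S n).measurableSet_fiber _)
    refine aestronglyMeasurable_of_tendsto_ae Filter.atTop hSmeas ?_
    filter_upwards [hFcont, ae_restrict_mem measurableSet_Icc] with t ht htm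
    have h1 : ContinuousWithinAt (fun x => F x t) Ω (q t) := ht _ (hqΩ t htm)
    refine h1.tendsto.comp (tendsto_nhdsWithin_iff.2 ⟨?_, Filter.Eventually.of_forall fun n => hSmem n t⟩)
    rw [← hq'eq t htm]
    exact hSlim t
  · let K : Set E := q '' Icc a b
    have hK : IsCompact K := isCompact_Icc.image_of_continuousOn hq
    have hKΩ : K ⊆ Ω := by rintro _ ⟨t, ht, rfl⟩; exact hqΩ t ht
    obtain ⟨M, hM, hb⟩ := hbdd K hKΩ hK
    refine ⟨M, hM, ?_⟩
    have : Nonempty K := ⟨⟨q a, a, ham, rfl⟩⟩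
    have h1 : ∀ᵐ t ∂(volume.restrict (Icc a b)), ∀ n : ℕ,
        ‖F (TopologicalSpace.denseSeq K n : E) t‖ ≤ M :=
      ae_all_iff.2 fun n => hb _ (TopologicalSpace.denseSeq K n).2
    filter_upwards [h1, hFcont, ae_restrict_mem measurableSet_Icc] with t ht hc htm
    have hcK : Continuous (fun x : K => F (x : E) t) :=
      continuousOn_iff_continuous_domRestrict.1 (hc.mono hKΩ)
    exact isClosed_property (p := fun x : K => ‖F (x : E) t‖ ≤ M)
      (TopologicalSpace.denseRange_denseSeq K)
      (isClosed_le hcK.norm continuous_const) ht ⟨q t, t, htm, rfl⟩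

theorem statement6 (a : ℝ) (If : Set ℝ)
    (haI : a ∈ If) (hIsub : If ⊆ Set.Ici a) (hIint : (interior If).Nonempty)
    (hIord : If.OrdConnected)
    (m : ℕ) (hm : 0 < m) (Ω : Set (EuclideanSpace ℝ (Fin m)))
    (hΩopen : IsOpen Ω) (hΩne : Ω.Nonempty)
    (α : Fin m → ℝ) (hα : ∀ i, 0 < α i ∧ α i ≤ 1)
    (qa : EuclideanSpace ℝ (Fin m)) (hqa : qa ∈ Ω)
    (F : EuclideanSpace ℝ (Fin m) → ℝ → EuclideanSpace ℝ (Fin m))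
    -- Carathéodory assumptions
    (hFmeas : ∀ x ∈ Ω, MeasureTheory.AEStronglyMeasurable (fun t => F x t)
      (MeasureTheory.volume.restrict If))
    (hFcont : ∀ᵐ t ∂(MeasureTheory.volume.restrict If), ContinuousOn (fun x => F x t) Ω)
    -- `F` is bounded on compacts
    (hbdd : ∀ K : Set (EuclideanSpace ℝ (Fin m)), K ⊆ Ω → IsCompact K →
      ∀ c ∈ If, ∀ d ∈ If, c ≤ d → ∃ M : ℝ, 0 ≤ M ∧ ∀ x ∈ K,
        ∀ᵐ t ∂(MeasureTheory.volume.restrict (Set.Icc c d)), ‖F x t‖ ≤ M)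
    (q : ℝ → EuclideanSpace ℝ (Fin m)) (I : Set ℝ) :
    IsCaputoLocalSol a If Ω α qa F q I ↔
      (IsIntervalFrom a I ∧ I ⊆ If ∧ ContinuousOn q I ∧ (∀ t ∈ I, q t ∈ Ω) ∧
        ∀ t ∈ I, ∀ i, q t i = qa i
          + (1 / Real.Gamma (α i)) * ∫ τ in a..t, (t - τ) ^ (α i - 1) * F (q τ) τ i) := by
  have facts : ∀ {b : ℝ}, IsIntervalFrom a I → I ⊆ If → ContinuousOn q I → (∀ t ∈ I, q t ∈ Ω) →
      b ∈ I → ∀ i, IntegrableOn (fun t => F (q t) t i) (Icc a b) ∧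
        ∃ M : ℝ, 0 ≤ M ∧ ∀ᵐ t ∂(volume.restrict (Icc a b)), |F (q t) t i| ≤ M := by
    intro b hI hIf hq hqΩ hbI i
    have hab : a ≤ b := hI.2.1 hbI
    have hsub : Icc a b ⊆ I := hI.2.2.2.out hI.1 hbI
    obtain ⟨h1, M, hM, h2⟩ := comp_facts (F := F) (q := q) (Ω := Ω) hab
      (fun x hx => (hFmeas x hx).mono_measure (Measure.restrict_mono (hsub.trans hIf) le_rfl))
      (ae_restrict_of_ae_restrict_of_subset (hsub.trans hIf) hFcont)
      (fun K hK hKc => hbdd K hK hKc a haI b (hIf hbI) hab)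
      (hq.mono hsub) (fun t ht => hqΩ t (hsub ht))
    have h3 : ∀ᵐ t ∂(volume.restrict (Icc a b)), |F (q t) t i| ≤ M := by
      filter_upwards [h2] with t ht
      exact (PiLp.norm_apply_le (F (q t) t) i).trans ht
    refine ⟨?_, M, hM, h3⟩
    have hm : AEStronglyMeasurable (fun t => F (q t) t i) (volume.restrict (Icc a b)) :=
      (EuclideanSpace.proj (𝕜 := ℝ) i).continuous.comp_aestronglyMeasurable h1
    exact Integrable.of_bound hm M h3
  constructor
  · rintro ⟨hI, hIf, hq, hqΩ, hqa', hsol⟩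
    refine ⟨hI, hIf, hq, hqΩ, fun t ht i => ?_⟩
    have hat0 : a ≤ t := hI.2.1 ht
    rcases hat0.eq_or_lt with rfl | hat
    · simp [hqa']
    have hsub : Icc a t ⊆ I := hI.2.2.2.out hI.1 ht
    obtain ⟨c, h, hint, hae, hF⟩ := hsol i
    obtain ⟨-, M, hM, hb⟩ := facts hI hIf hq hqΩ ht i
    have hF' := ae_restrict_of_ae_restrict_of_subset hsub hF
    have hae' := ae_restrict_of_ae_restrict_of_subset hsub hae
    have hqi : ContinuousOn (fun τ => q τ i - qa i) (Icc a t) :=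
      (((EuclideanSpace.proj (𝕜 := ℝ) i).continuous.comp_continuousOn hq).mono hsub).sub
        continuousOn_const
    have key := fwd1 (u := fun τ => q τ i - qa i) (hα i).1 (hα i).2 hat hqi (by simp [hqa'])
      (hint t ht) hM (by filter_upwards [hb, hF'] with s h1 h2; rwa [h2]) hae'
    rw [← sub_eq_iff_eq_add', key]
    congr 1
    apply intervalIntegral.integral_congr_ae
    rw [uIoc_of_le hat.le]
    filter_upwards [(ae_restrict_iff' measurableSet_Icc).1 hF'] with s hs hmem
    rw [hs ⟨hmem.1.le, hmem.2⟩]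
  · rintro ⟨hI, hIf, hq, hqΩ, hsol⟩
    refine ⟨hI, hIf, hq, hqΩ, ?_, fun i => ⟨0, fun t => F (q t) t i,
      fun b hb => (facts hI hIf hq hqΩ hb i).1, ?_, Filter.Eventually.of_forall fun _ => rfl⟩⟩
    · ext i
      simpa using hsol a hI.1 i
    · refine ae_restrict_of_forall_mem hI.2.2.2.measurableSet fun t ht => ?_
      have hsub : Icc a t ⊆ I := hI.2.2.2.out hI.1 ht
      rw [zero_add]
      exact bwd1 (hα i).1 (hα i).2 (hI.2.1 ht) (facts hI hIf hq hqΩ ht i).1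
        (fun s hs => by rw [hsol s (hsub hs) i]; ring)
end

section
/- Let a ∈ ℝ, let I_f be an interval with least element a, nonempty interior, and I_f ⊂ [a,∞), let Ω ⊂ ℝ^m be a nonempty open set, let α = (α₁,…,α_m) ∈ (0,1]^m, let q_a ∈ Ω, and let f : Ω × I_f → ℝ^m be a Carathéodory function that is bounded on compacts and locally Lipschitz continuous in its first variable: for every (x,t) ∈ Ω × I_f there exist R > 0, δ > 0 and L ≥ 0 such that the closed ball B̄(x,R) ⊂ Ω and |f(x₂,τ) − f(x₁,τ)| ≤ L|x₂ − x₁| for all x₁, x₂ ∈ B̄(x,R) and almost every τ ∈ [t−δ,t+δ] ∩ I_f. Then the Caputo Cauchy problem ( _cD^{α_i}_{a+}[q_i] = f_i(q(·),·) a.e., q(a) = q_a ) has a unique maximal solution (q,I); moreover, every local solution (q',I') of the problem satisfies I' ⊂ I and q = q' on I'. -/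
open MeasureTheory Set

open Filter Topology

namespace Cap

structure BM (h : ℝ → ℝ) (a b : ℝ) : Prop where
  meas : AEStronglyMeasurable h (volume.restrict (Icc a b))
  bdd : ∃ M : ℝ, 0 ≤ M ∧ ∀ᵐ t ∂(volume.restrict (Icc a b)), |h t| ≤ M

lemma BM.mono {h : ℝ → ℝ} {a b c d : ℝ} (H : BM h a b) (hs : Icc c d ⊆ Icc a b) : BM h c d := by
  obtain ⟨M, hM, hb⟩ := H.bdd
  exact ⟨H.meas.mono_set hs, M, hM, ae_restrict_of_ae_restrict_of_subset hs hb⟩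

lemma BM.congr {h g : ℝ → ℝ} {a b : ℝ} (H : BM h a b)
    (e : h =ᵐ[volume.restrict (Icc a b)] g) : BM g a b := by
  obtain ⟨M, hM, hb⟩ := H.bdd
  refine ⟨H.meas.congr e, M, hM, ?_⟩
  filter_upwards [hb, e] with t h1 h2
  rwa [← h2]

lemma BM.sub {h g : ℝ → ℝ} {a b : ℝ} (H : BM h a b) (G : BM g a b) :
    BM (fun t => h t - g t) a b := by
  obtain ⟨M, hM, hb⟩ := H.bdd
  obtain ⟨N, hN, gb⟩ := G.bdd
  refine ⟨H.meas.sub G.meas, M + N, by positivity, ?_⟩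
  filter_upwards [hb, gb] with t h1 h2
  exact (abs_sub _ _).trans (add_le_add h1 h2)

lemma BM.of_cont {h : ℝ → ℝ} {a b : ℝ} (H : ContinuousOn h (Icc a b)) : BM h a b := by
  refine ⟨H.aestronglyMeasurable measurableSet_Icc, ?_⟩
  obtain ⟨M, hM⟩ := isCompact_Icc.exists_bound_of_continuousOn H
  refine ⟨max M 0, le_max_right _ _, ?_⟩
  filter_upwards [ae_restrict_mem measurableSet_Icc] with t ht
  exact (hM t ht).trans (le_max_left _ _)

lemma BM.integrableOn {h : ℝ → ℝ} {a b : ℝ} (H : BM h a b) : IntegrableOn h (Icc a b) := by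
  obtain ⟨M, hM, hb⟩ := H.bdd
  exact Integrable.of_bound H.meas M (by simpa using hb)

lemma BM.intervalIntegrable {h : ℝ → ℝ} {a b : ℝ} (hab : a ≤ b) (H : BM h a b) :
    IntervalIntegrable h volume a b := by
  rw [intervalIntegrable_iff_integrableOn_Icc_of_le hab]
  exact H.integrableOn

lemma ker_ii {α : ℝ} (hα : 0 < α) (u s t : ℝ) :
    IntervalIntegrable (fun τ => (u - τ) ^ (α - 1)) volume s t := by
  have h := (intervalIntegral.intervalIntegrable_rpow' (a := u - s) (b := u - t)
    (r := α - 1) (by linarith)).comp_sub_left u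
  simpa using h

lemma ker_int {α : ℝ} (hα : 0 < α) (u s t : ℝ) :
    ∫ τ in s..t, (u - τ) ^ (α - 1) = ((u - s) ^ α - (u - t) ^ α) / α := by
  rw [intervalIntegral.integral_comp_sub_left (fun x => x ^ (α - 1)) u,
    integral_rpow (Or.inl (by linarith))]
  simp

lemma ker_mul_ii {α : ℝ} (hα : 0 < α) {h : ℝ → ℝ} {s t : ℝ} (hst : s ≤ t) (H : BM h s t)
    (u : ℝ) : IntervalIntegrable (fun τ => (u - τ) ^ (α - 1) * h τ) volume s t := by
  obtain ⟨M, hM, hb⟩ := H.bdd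
  have hk := ker_ii hα u s t
  rw [intervalIntegrable_iff_integrableOn_Icc_of_le hst] at hk ⊢
  exact hk.mul_bdd (c := M) H.meas (by simpa using hb)

lemma ker_mul_bound {α : ℝ} (hα : 0 < α) {h : ℝ → ℝ} {s t : ℝ} (hst : s ≤ t) {M : ℝ}
    (hb : ∀ᵐ τ ∂(volume.restrict (Icc s t)), |h τ| ≤ M) :
    |∫ τ in s..t, (t - τ) ^ (α - 1) * h τ| ≤ M * ((t - s) ^ α / α) := by
  have e : M * ((t - s) ^ α / α) = ∫ τ in s..t, (t - τ) ^ (α - 1) * M := by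
    rw [intervalIntegral.integral_mul_const, ker_int hα]
    simp [Real.zero_rpow hα.ne', mul_comm]
  rw [e, ← Real.norm_eq_abs]
  refine intervalIntegral.norm_integral_le_of_norm_le hst ?_ ((ker_ii hα t s t).mul_const M)
  rw [ae_restrict_iff' measurableSet_Icc] at hb
  filter_upwards [hb] with τ h1 h2
  have h3 := h1 ⟨h2.1.le, h2.2⟩
  have h4 : 0 ≤ (t - τ) ^ (α - 1) := Real.rpow_nonneg (by linarith [h2.2]) _
  rw [norm_mul, Real.norm_eq_abs, Real.norm_eq_abs, abs_of_nonneg h4]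
  gcongr

lemma holder {α : ℝ} (hα : 0 < α) (hα1 : α ≤ 1) {h : ℝ → ℝ} {a s t : ℝ} (has : a ≤ s)
    (hst : s ≤ t) (H : AEStronglyMeasurable h (volume.restrict (Icc a t))) {M : ℝ} (hM : 0 ≤ M)
    (hb : ∀ᵐ τ ∂(volume.restrict (Icc a t)), |h τ| ≤ M) :
    |(∫ τ in a..t, (t - τ) ^ (α - 1) * h τ) - ∫ τ in a..s, (s - τ) ^ (α - 1) * h τ|
      ≤ 2 * M / α * (t - s) ^ α := by
  have B : BM h a t := ⟨H, M, hM, hb⟩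
  have B1 : BM h a s := B.mono (Icc_subset_Icc_right hst)
  have B2 : BM h s t := B.mono (Icc_subset_Icc_left has)
  have e : (∫ τ in a..t, (t - τ) ^ (α - 1) * h τ) - ∫ τ in a..s, (s - τ) ^ (α - 1) * h τ
      = (∫ τ in a..s, ((t - τ) ^ (α - 1) - (s - τ) ^ (α - 1)) * h τ)
        + ∫ τ in s..t, (t - τ) ^ (α - 1) * h τ := by
    rw [← intervalIntegral.integral_add_adjacent_intervals (ker_mul_ii hα has B1 t)
      (ker_mul_ii hα hst B2 t)]
    simp_rw [sub_mul]
    rw [intervalIntegral.integral_sub (ker_mul_ii hα has B1 t) (ker_mul_ii hα has B1 s)]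
    ring
  rw [e]
  have b2 := ker_mul_bound hα hst
    (ae_restrict_of_ae_restrict_of_subset (Icc_subset_Icc_left has) hb)
  have b1 : |∫ τ in a..s, ((t - τ) ^ (α - 1) - (s - τ) ^ (α - 1)) * h τ|
      ≤ M * ((t - s) ^ α / α) := by
    have i1 : ∫ τ in a..s, ((s - τ) ^ (α - 1) - (t - τ) ^ (α - 1)) * M
        ≤ M * ((t - s) ^ α / α) := by
      rw [intervalIntegral.integral_mul_const, intervalIntegral.integral_sub (ker_ii hα _ _ _)
        (ker_ii hα _ _ _), ker_int hα, ker_int hα, mul_comm]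
      apply mul_le_mul_of_nonneg_left _ hM
      rw [← sub_div]
      apply div_le_div_of_nonneg_right _ hα.le
      have : (s - a) ^ α ≤ (t - a) ^ α :=
        Real.rpow_le_rpow (by linarith) (by linarith) hα.le
      simp only [sub_self, Real.zero_rpow hα.ne']
      linarith
    refine le_trans ?_ i1
    rw [← Real.norm_eq_abs]
    refine intervalIntegral.norm_integral_le_of_norm_le has ?_
      (((ker_ii hα s a s).sub (ker_ii hα t a s)).mul_const M)
    have hb' := ae_restrict_of_ae_restrict_of_subset
      (Icc_subset_Icc_right hst : Icc a s ⊆ Icc a t) hb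
    rw [ae_restrict_iff' measurableSet_Icc] at hb'
    have hne : ∀ᵐ τ : ℝ, τ ≠ s := by simp [ae_iff]
    filter_upwards [hb', hne] with τ h1 h0 h2
    have h3 := h1 ⟨h2.1.le, h2.2⟩
    have h4 : (t - τ) ^ (α - 1) ≤ (s - τ) ^ (α - 1) :=
      Real.rpow_le_rpow_of_nonpos (sub_pos.2 (lt_of_le_of_ne h2.2 h0)) (by linarith)
        (by linarith)
    rw [norm_mul, Real.norm_eq_abs, Real.norm_eq_abs, abs_sub_comm, abs_of_nonneg (by linarith)]
    exact mul_le_mul_of_nonneg_left h3 (by linarith)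
  calc _ ≤ _ := abs_add_le _ _
    _ ≤ _ := add_le_add b1 b2
    _ = _ := by ring

lemma rl_cont {α : ℝ} (hα : 0 < α) (hα1 : α ≤ 1) {h : ℝ → ℝ} {a b : ℝ} (B : BM h a b) :
    ContinuousOn (rlInt a α h) (Icc a b) := by
  have e : rlInt a α h = fun t => (1 / Real.Gamma α) * ∫ τ in a..t, (t - τ) ^ (α - 1) * h τ := by
    ext t; simp [rlInt, hα.ne']
  rw [e]
  apply ContinuousOn.mul continuousOn_const
  obtain ⟨M, hM, hb⟩ := B.bdd
  set J : ℝ → ℝ := fun t => ∫ τ in a..t, (t - τ) ^ (α - 1) * h τ with hJ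
  have key : ∀ x ∈ Icc a b, ∀ y ∈ Icc a b, |J y - J x| ≤ 2 * M / α * |y - x| ^ α := by
    intro x hx y hy
    rcases le_total x y with hxy | hxy
    · have := holder hα hα1 hx.1 hxy (B.mono (Icc_subset_Icc_right hy.2)).meas hM
        (ae_restrict_of_ae_restrict_of_subset (Icc_subset_Icc_right hy.2) hb)
      rwa [abs_of_nonneg (sub_nonneg.2 hxy)]
    · have := holder hα hα1 hy.1 hxy (B.mono (Icc_subset_Icc_right hx.2)).meas hM
        (ae_restrict_of_ae_restrict_of_subset (Icc_subset_Icc_right hx.2) hb)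
      rw [abs_sub_comm, abs_sub_comm y, abs_of_nonneg (sub_nonneg.2 hxy)]
      exact this
  intro x hx
  rw [ContinuousWithinAt, tendsto_iff_dist_tendsto_zero]
  have hz : Tendsto (fun y => 2 * M / α * |y - x| ^ α) (𝓝[Icc a b] x) (𝓝 0) := by
    have : ContinuousAt (fun y => 2 * M / α * |y - x| ^ α) x := by
      apply ContinuousAt.mul continuousAt_const
      apply ContinuousAt.rpow_const (by fun_prop) (Or.inr hα.le)
    have h2 := this.tendsto.mono_left (nhdsWithin_le_nhds (s := Icc a b))
    simpa [Real.zero_rpow hα.ne'] using h2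
  refine squeeze_zero' (Eventually.of_forall fun _ => dist_nonneg) ?_ hz
  filter_upwards [self_mem_nhdsWithin] with y hy
  exact key x hx y hy

lemma rl_congr {α : ℝ} (hα : 0 < α) {h g : ℝ → ℝ} {a t : ℝ} (hat : a ≤ t)
    (e : h =ᵐ[volume.restrict (Icc a t)] g) : rlInt a α h t = rlInt a α g t := by
  simp only [rlInt, hα.ne', if_false]
  congr 1
  apply intervalIntegral.integral_congr_ae
  have e' := e
  rw [EventuallyEq, ae_restrict_iff' measurableSet_Icc] at e'
  filter_upwards [e'] with τ h1 h2
  rw [uIoc_of_le hat] at h2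
  rw [h1 ⟨h2.1.le, h2.2⟩]

lemma rl_self (a : ℝ) {α : ℝ} (hα : 0 < α) (h : ℝ → ℝ) : rlInt a α h a = 0 := by
  simp [rlInt, hα.ne']

lemma rl_one (a : ℝ) (h : ℝ → ℝ) (t : ℝ) : rlInt a 1 h t = ∫ τ in a..t, h τ := by
  simp [rlInt]

lemma rl_sub_bound {α : ℝ} (hα : 0 < α) {h g : ℝ → ℝ} {a T t : ℝ} (haT : a ≤ T) (hTt : T ≤ t)
    (H : BM h a t) (G : BM g a t) (e : h =ᵐ[volume.restrict (Icc a T)] g) {C : ℝ}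
    (hC : ∀ᵐ τ ∂(volume.restrict (Icc T t)), |h τ - g τ| ≤ C) :
    |rlInt a α h t - rlInt a α g t| ≤ C * ((t - T) ^ α / (Real.Gamma α * α)) := by
  have hat := haT.trans hTt
  have G0 := Real.Gamma_pos_of_pos hα
  simp only [rlInt, hα.ne', if_false]
  have D := H.sub G
  rw [← mul_sub, ← intervalIntegral.integral_sub (ker_mul_ii hα hat H t) (ker_mul_ii hα hat G t)]
  simp_rw [← mul_sub]
  rw [← intervalIntegral.integral_add_adjacent_intervals
    (ker_mul_ii hα haT (D.mono (Icc_subset_Icc_right hTt)) t)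
    (ker_mul_ii hα hTt (D.mono (Icc_subset_Icc_left haT)) t)]
  have z : ∫ τ in a..T, (t - τ) ^ (α - 1) * (h τ - g τ) = 0 := by
    have : ∫ τ in a..T, (t - τ) ^ (α - 1) * (h τ - g τ) = ∫ τ in a..T, (0:ℝ) := by
      apply intervalIntegral.integral_congr_ae
      have e' := e
      rw [EventuallyEq, ae_restrict_iff' measurableSet_Icc] at e'
      filter_upwards [e'] with τ h1 h2
      rw [uIoc_of_le haT] at h2
      rw [h1 ⟨h2.1.le, h2.2⟩]; simp
    simpa using this
  rw [z, zero_add, abs_mul, abs_of_pos (by positivity)]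
  have := ker_mul_bound hα hTt hC
  calc _ ≤ 1 / Real.Gamma α * (C * ((t - T) ^ α / α)) := by gcongr
    _ = _ := by field_simp

lemma beta_int {β γ : ℝ} (hβ : 0 < β) (hγ : 0 < γ) {τ t : ℝ} (h : τ < t) :
    ∫ s in τ..t, (t - s) ^ (β - 1) * (s - τ) ^ (γ - 1)
      = (t - τ) ^ (β + γ - 1) * ProbabilityTheory.beta γ β := by
  have h1 : ∫ s in τ..t, (t - s) ^ (β - 1) * (s - τ) ^ (γ - 1)
      = ∫ x in (0:ℝ)..(t - τ), x ^ (γ - 1) * ((t - τ) - x) ^ (β - 1) := by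
    have := intervalIntegral.integral_comp_sub_right (a := τ) (b := t)
      (fun x => x ^ (γ - 1) * ((t - τ) - x) ^ (β - 1)) τ
    rw [sub_self] at this
    rw [← this]
    congr 1; ext s
    rw [mul_comm]; congr 2; ring
  rw [h1]
  have h2 := Complex.betaIntegral_scaled (γ : ℂ) (β : ℂ) (sub_pos.2 h)
  rw [Complex.betaIntegral_eq_Gamma_mul_div _ _ (by simpa) (by simpa)] at h2
  have h3 : ∫ x in (0:ℝ)..(t - τ), (x : ℂ) ^ ((γ : ℂ) - 1) * (((t - τ : ℝ) : ℂ) - x) ^ ((β : ℂ) - 1)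
      = ((∫ x in (0:ℝ)..(t - τ), x ^ (γ - 1) * ((t - τ) - x) ^ (β - 1) : ℝ) : ℂ) := by
    rw [← intervalIntegral.integral_ofReal]
    apply intervalIntegral.integral_congr
    intro x hx
    rw [uIcc_of_le (by linarith)] at hx
    simp only
    rw [Complex.ofReal_mul, Complex.ofReal_cpow hx.1, Complex.ofReal_cpow (by linarith [hx.2])]
    push_cast; rfl
  rw [h3] at h2
  have h4 : (((t - τ : ℝ) : ℂ)) ^ ((γ : ℂ) + β - 1) = (((t - τ) ^ (β + γ - 1) : ℝ) : ℂ) := by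
    rw [Complex.ofReal_cpow (by linarith)]; push_cast; congr 1; ring
  rw [h4, ← Complex.ofReal_add γ β, Complex.Gamma_ofReal, Complex.Gamma_ofReal,
    Complex.Gamma_ofReal] at h2
  rw [ProbabilityTheory.beta]
  exact_mod_cast h2

lemma beta_ii {β γ : ℝ} (hβ : 0 < β) (hγ : 0 < γ) {τ t : ℝ} (h : τ < t) :
    IntervalIntegrable (fun s => (t - s) ^ (β - 1) * (s - τ) ^ (γ - 1)) volume τ t := by
  by_contra hn
  have := intervalIntegral.integral_undef hn
  rw [beta_int hβ hγ h] at this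
  have h1 := ProbabilityTheory.beta_pos hγ hβ
  have h2 : 0 < (t - τ) ^ (β + γ - 1) := Real.rpow_pos_of_pos (sub_pos.2 h) _
  exact (mul_pos h2 h1).ne' this

end Cap

namespace Cap

lemma tri_s {β γ : ℝ} (hβ : 0 < β) (hγ : 0 < γ) {a τ t : ℝ} (h1 : a ≤ τ) (h2 : τ < t) (c : ℝ) :
    Integrable (fun s => if τ < s then (t - s) ^ (β - 1) * (s - τ) ^ (γ - 1) * c else 0)
      (volume.restrict (Ioc a t)) ∧
    ∫ s in Ioc a t, (if τ < s then (t - s) ^ (β - 1) * (s - τ) ^ (γ - 1) * c else 0)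
      = (t - τ) ^ (β + γ - 1) * c * ProbabilityTheory.beta γ β := by
  have e : (fun s => if τ < s then (t - s) ^ (β - 1) * (s - τ) ^ (γ - 1) * c else 0)
      = (Ioi τ).indicator (fun s => (t - s) ^ (β - 1) * (s - τ) ^ (γ - 1) * c) := by
    ext s; simp [indicator]
  have es : Ioi τ ∩ Ioc a t = Ioc τ t := by
    ext s; simp only [mem_inter_iff, mem_Ioi, mem_Ioc]
    constructor
    · rintro ⟨h, h', h''⟩; exact ⟨h, h''⟩
    · rintro ⟨h, h'⟩; exact ⟨h, by linarith, h'⟩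
  rw [e]
  constructor
  · rw [integrable_indicator_iff measurableSet_Ioi, IntegrableOn,
      Measure.restrict_restrict measurableSet_Ioi, es]
    have := (beta_ii hβ hγ h2).mul_const c
    rw [intervalIntegrable_iff_integrableOn_Ioc_of_le h2.le] at this
    exact this
  · rw [integral_indicator measurableSet_Ioi, Measure.restrict_restrict measurableSet_Ioi, es,
      ← intervalIntegral.integral_of_le h2.le, intervalIntegral.integral_mul_const,
      beta_int hβ hγ h2]
    ring

lemma tri_t (γ : ℝ) {a s t : ℝ} (h1 : a < s) (h2 : s ≤ t) (c : ℝ) (h : ℝ → ℝ) :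
    ∫ τ in Ioc a t, (if τ < s then c * (s - τ) ^ (γ - 1) * h τ else 0)
      = c * ∫ τ in a..s, (s - τ) ^ (γ - 1) * h τ := by
  have e : (fun τ => if τ < s then c * (s - τ) ^ (γ - 1) * h τ else 0)
      = (Iio s).indicator (fun τ => c * ((s - τ) ^ (γ - 1) * h τ)) := by
    ext s; simp [indicator, mul_assoc]
  have es : Iio s ∩ Ioc a t = Ioo a s := by
    ext τ; simp only [mem_inter_iff, mem_Iio, mem_Ioc, mem_Ioo]
    constructor
    · rintro ⟨h, h', h''⟩; exact ⟨h', h⟩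
    · rintro ⟨h, h'⟩; exact ⟨h', h, by linarith⟩
  rw [e, integral_indicator measurableSet_Iio, Measure.restrict_restrict measurableSet_Iio, es,
    ← integral_Ioc_eq_integral_Ioo, integral_const_mul, ← intervalIntegral.integral_of_le h1.le]

lemma semigroup {β γ : ℝ} (hβ : 0 < β) (hγ : 0 < γ) {a t : ℝ} (hat : a ≤ t) {h : ℝ → ℝ}
    (H : BM h a t) :
    ∫ s in a..t, (t - s) ^ (β - 1) * ∫ τ in a..s, (s - τ) ^ (γ - 1) * h τ
      = (∫ τ in a..t, (t - τ) ^ (β + γ - 1) * h τ) * ProbabilityTheory.beta γ β := by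
  set μ := volume.restrict (Ioc a t) with hμ
  have Hm : AEStronglyMeasurable h μ := H.meas.mono_set Ioc_subset_Icc_self
  set f : ℝ → ℝ → ℝ := fun s τ =>
    if τ < s then (t - s) ^ (β - 1) * (s - τ) ^ (γ - 1) * h τ else 0 with hf
  have hne : ∀ᵐ τ ∂μ, a < τ ∧ τ < t := by
    have : ∀ᵐ τ : ℝ, τ ≠ t := by simp [ae_iff]
    filter_upwards [ae_restrict_mem measurableSet_Ioc, ae_restrict_of_ae this] with τ h1 h2
    exact ⟨h1.1, lt_of_le_of_ne h1.2 h2⟩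
  have hmeas : AEStronglyMeasurable (Function.uncurry f) (μ.prod μ) := by
    have e : Function.uncurry f = {p : ℝ × ℝ | p.2 < p.1}.indicator
        (fun p => (t - p.1) ^ (β - 1) * (p.1 - p.2) ^ (γ - 1) * h p.2) := by
      ext p; simp [hf, Function.uncurry, indicator]
    rw [e]
    apply AEStronglyMeasurable.indicator _ (measurableSet_lt measurable_snd measurable_fst)
    apply AEStronglyMeasurable.mul
    · apply Measurable.aestronglyMeasurable
      fun_prop
    · exact Hm.comp_snd
  have hIntg : Integrable (Function.uncurry f) (μ.prod μ) := by
    rw [integrable_prod_iff' hmeas]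
    constructor
    · filter_upwards [hne] with τ hτ
      exact (tri_s hβ hγ hτ.1.le hτ.2 (h τ)).1
    · have e : (fun y => ∫ x, ‖Function.uncurry f (x, y)‖ ∂μ) =ᵐ[μ]
          fun τ => (t - τ) ^ (β + γ - 1) * |h τ| * ProbabilityTheory.beta γ β := by
        filter_upwards [hne] with τ hτ
        rw [← (tri_s hβ hγ hτ.1.le hτ.2 |h τ|).2]
        apply setIntegral_congr_fun measurableSet_Ioc
        intro s hs
        simp only [hf, Function.uncurry]
        split_ifs with hc
        · rw [norm_mul, Real.norm_eq_abs, Real.norm_eq_abs, abs_of_nonneg]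
          exact mul_nonneg (Real.rpow_nonneg (by linarith [hs.2]) _)
            (Real.rpow_nonneg (by linarith) _)
        · simp
      rw [integrable_congr e]
      have Ha : BM (fun τ => |h τ|) a t := by
        obtain ⟨M, hM, hb⟩ := H.bdd
        exact ⟨H.meas.norm, M, hM, by simpa using hb⟩
      have := (ker_mul_ii (add_pos hβ hγ) hat Ha t).mul_const (ProbabilityTheory.beta γ β)
      rw [intervalIntegrable_iff_integrableOn_Ioc_of_le hat] at this
      exact this
  have sw := integral_integral_swap hIntg
  have L : ∫ s, ∫ τ, f s τ ∂μ ∂μ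
      = ∫ s in a..t, (t - s) ^ (β - 1) * ∫ τ in a..s, (s - τ) ^ (γ - 1) * h τ := by
    rw [intervalIntegral.integral_of_le hat]
    apply setIntegral_congr_fun measurableSet_Ioc
    intro s hs
    exact tri_t γ hs.1 hs.2 _ h
  have R : ∫ τ, ∫ s, f s τ ∂μ ∂μ
      = (∫ τ in a..t, (t - τ) ^ (β + γ - 1) * h τ) * ProbabilityTheory.beta γ β := by
    rw [← intervalIntegral.integral_mul_const, intervalIntegral.integral_of_le hat]
    apply integral_congr_ae
    filter_upwards [hne] with τ hτ
    exact (tri_s hβ hγ hτ.1.le hτ.2 (h τ)).2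
  rw [← L, ← R, sw]

lemma rl_semigroup {β γ : ℝ} (hβ : 0 < β) (hγ : 0 < γ) {a t : ℝ} (hat : a ≤ t) {h : ℝ → ℝ}
    (H : BM h a t) : rlInt a β (rlInt a γ h) t = rlInt a (β + γ) h t := by
  have e : rlInt a γ h = fun t => (1 / Real.Gamma γ) * ∫ τ in a..t, (t - τ) ^ (γ - 1) * h τ := by
    ext t; simp [rlInt, hγ.ne']
  rw [e]
  have h0 : β + γ ≠ 0 := by positivity
  simp only [rlInt, hβ.ne', h0, if_false]
  have e2 : ∀ s, (t - s) ^ (β - 1) * (1 / Real.Gamma γ * ∫ τ in a..s, (s - τ) ^ (γ - 1) * h τ)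
      = 1 / Real.Gamma γ * ((t - s) ^ (β - 1) * ∫ τ in a..s, (s - τ) ^ (γ - 1) * h τ) := by
    intro s; ring
  simp_rw [e2]
  rw [intervalIntegral.integral_const_mul, semigroup hβ hγ hat H, ProbabilityTheory.beta,
    add_comm γ β]
  have g1 := (Real.Gamma_pos_of_pos hβ).ne'
  have g2 := (Real.Gamma_pos_of_pos hγ).ne'
  field_simp

/-- continuous functions with equal primitives are equal -/
lemma eq_of_prim {f g : ℝ → ℝ} {a b : ℝ} (hab : a < b) (hf : ContinuousOn f (Icc a b))
    (hg : ContinuousOn g (Icc a b)) (e : ∀ t ∈ Icc a b, ∫ τ in a..t, f τ = ∫ τ in a..t, g τ) :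
    EqOn f g (Icc a b) := by
  apply Measure.eqOn_Icc_of_ae_eq volume hab.ne _ hf hg
  have hD : ∀ {u : ℝ → ℝ}, ContinuousOn u (Icc a b) → ∀ x ∈ Ioo a b,
      HasDerivAt (fun t => ∫ τ in a..t, u τ) (u x) x := by
    intro u hu x hx
    have hn : Icc a b ∈ 𝓝 x := Icc_mem_nhds hx.1 hx.2
    apply intervalIntegral.integral_hasDerivAt_right
    · rw [intervalIntegrable_iff_integrableOn_Icc_of_le hx.1.le]
      exact (hu.mono (Icc_subset_Icc_right hx.2.le)).integrableOn_Icc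
    · exact hu.stronglyMeasurableAtFilter_nhdsWithin measurableSet_Icc x |>.filter_mono
        (by rw [nhdsWithin_eq_nhds.2 hn])
    · exact hu.continuousAt hn
  have : ∀ᵐ x ∂volume.restrict (Ioo a b), f x = g x := by
    filter_upwards [ae_restrict_mem measurableSet_Ioo] with x hx
    have h1 := hD hf x hx
    have h2 := hD hg x hx
    refine h1.unique (h2.congr_of_eventuallyEq ?_)
    filter_upwards [Icc_mem_nhds hx.1 hx.2] with y hy
    exact e y hy
  rwa [Measure.restrict_congr_set Ioo_ae_eq_Icc] at this

end Cap

namespace Cap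

lemma prim_cont {h : ℝ → ℝ} {a b : ℝ} (H : BM h a b) (hab : a ≤ b) :
    ContinuousOn (fun t => ∫ τ in a..t, h τ) (Icc a b) := by
  have := intervalIntegral.continuousOn_primitive_interval
    (by rw [uIcc_of_le hab]; exact H.integrableOn)
  rwa [uIcc_of_le hab] at this

lemma to_integral {α : ℝ} (hα : 0 < α) (hα1 : α ≤ 1) {u h : ℝ → ℝ} {a b c : ℝ} (hab : a < b)
    (hu : ContinuousOn u (Icc a b)) (hua : u a = 0) (H : BM h a b)
    (e : ∀ᵐ t ∂(volume.restrict (Icc a b)), rlInt a (1 - α) u t = c + ∫ τ in a..t, h τ) :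
    ∀ t ∈ Icc a b, u t = rlInt a α h t := by
  have ha : a ∈ Icc a b := ⟨le_rfl, hab.le⟩
  have hP : ContinuousOn (fun t => c + ∫ τ in a..t, h τ) (Icc a b) :=
    continuousOn_const.add (prim_cont H hab.le)
  rcases hα1.eq_or_lt with rfl | hlt
  · have e0 : ∀ t, rlInt a (1 - 1) u t = u t := fun t => by simp [rlInt]
    simp_rw [e0] at e
    have E := Measure.eqOn_Icc_of_ae_eq volume hab.ne e hu hP
    have h1 := E ha
    simp [hua] at h1
    intro t ht
    rw [rl_one, E ht, ← h1]; simp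
  · have h1α : 0 < 1 - α := by linarith
    have Bu := BM.of_cont hu
    have E := Measure.eqOn_Icc_of_ae_eq volume hab.ne e (rl_cont h1α (by linarith) Bu) hP
    have h1 := E ha
    simp [rl_self a h1α] at h1
    apply eq_of_prim hab hu (rl_cont hα hα1 H)
    intro t ht
    have Bt := Bu.mono (Icc_subset_Icc_right ht.2)
    have Ht := H.mono (Icc_subset_Icc_right ht.2)
    have s1 := rl_semigroup hα h1α ht.1 Bt
    have s2 := rl_semigroup hα one_pos ht.1 Ht
    have s3 := rl_semigroup one_pos hα ht.1 Ht
    rw [rl_one] at s3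
    rw [add_sub_cancel, rl_one] at s1
    rw [← s1, s3, add_comm, ← s2]
    apply rl_congr hα ht.1
    filter_upwards [ae_restrict_mem measurableSet_Icc] with s hs
    rw [E ⟨hs.1, hs.2.trans ht.2⟩, rl_one, ← h1]; simp

lemma from_integral {α : ℝ} (hα : 0 < α) (hα1 : α ≤ 1) {u h : ℝ → ℝ} {a t : ℝ} (hat : a ≤ t)
    (H : BM h a t) (e : ∀ s ∈ Icc a t, u s = rlInt a α h s) :
    rlInt a (1 - α) u t = 0 + ∫ τ in a..t, h τ := by
  rcases hα1.eq_or_lt with rfl | hlt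
  · simp only [rlInt, sub_self, if_true, zero_add]
    rw [e t ⟨hat, le_rfl⟩, rl_one]
  · have h1α : 0 < 1 - α := by linarith
    have := rl_semigroup h1α hα hat H
    rw [sub_add_cancel, rl_one] at this
    rw [zero_add, ← this]
    apply rl_congr h1α hat
    filter_upwards [ae_restrict_mem measurableSet_Icc] with s hs
    exact e s hs

section car
variable {X Y : Type*} [NormedAddCommGroup X] [SecondCountableTopology X]
  [NormedAddCommGroup Y]

lemma unif_bdd {F : X → ℝ → Y} {Ω K : Set X} (hK : K ⊆ Ω) {μ : Measure ℝ} {M : ℝ}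
    (hc : ∀ᵐ t ∂μ, ContinuousOn (fun x => F x t) Ω)
    (hb : ∀ x ∈ K, ∀ᵐ t ∂μ, ‖F x t‖ ≤ M) : ∀ᵐ t ∂μ, ∀ x ∈ K, ‖F x t‖ ≤ M := by
  obtain ⟨D, hDc, hD⟩ := TopologicalSpace.exists_countable_dense K
  have h1 : ∀ᵐ t ∂μ, ∀ x ∈ D, ‖F (x : X) t‖ ≤ M := (ae_ball_iff hDc).2 fun x _ => hb x x.2
  filter_upwards [hc, h1] with t h2 h3 x hx
  have hcl : IsClosed {y : K | ‖F (y : X) t‖ ≤ M} := by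
    have : Continuous fun y : K => F (y : X) t := (h2.mono hK).domRestrict
    exact isClosed_le this.norm continuous_const
  have : closure D ⊆ {y : K | ‖F (y : X) t‖ ≤ M} := hcl.closure_subset_iff.2 h3
  exact this (hD ⟨x, hx⟩)

lemma unif_lip {F : X → ℝ → Y} {Ω K : Set X} (hK : K ⊆ Ω) {μ : Measure ℝ} {L : ℝ}
    (hc : ∀ᵐ t ∂μ, ContinuousOn (fun x => F x t) Ω)
    (hb : ∀ x ∈ K, ∀ y ∈ K, ∀ᵐ t ∂μ, ‖F y t - F x t‖ ≤ L * ‖y - x‖) :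
    ∀ᵐ t ∂μ, ∀ x ∈ K, ∀ y ∈ K, ‖F y t - F x t‖ ≤ L * ‖y - x‖ := by
  obtain ⟨D, hDc, hD⟩ := TopologicalSpace.exists_countable_dense (K × K)
  have h1 : ∀ᵐ t ∂μ, ∀ x ∈ D, ‖F (x.2 : X) t - F (x.1 : X) t‖ ≤ L * ‖(x.2 : X) - x.1‖ :=
    (ae_ball_iff hDc).2 fun x _ => hb x.1 x.1.2 x.2 x.2.2
  filter_upwards [hc, h1] with t h2 h3 x hx y hy
  have hcl : IsClosed {x : K × K | ‖F (x.2 : X) t - F (x.1 : X) t‖ ≤ L * ‖(x.2 : X) - x.1‖} := by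
    have h4 : Continuous fun y : K => F (y : X) t := (h2.mono hK).domRestrict
    have h5 : Continuous fun y : K × K => F (y.1 : X) t := h4.comp continuous_fst
    have h6 : Continuous fun y : K × K => F (y.2 : X) t := h4.comp continuous_snd
    exact isClosed_le (h6.sub h5).norm (by fun_prop)
  have := hcl.closure_subset_iff.2 h3
  exact this (hD (⟨x, hx⟩, ⟨y, hy⟩))

lemma super_simple {F : X → ℝ → Y} {Ω : Set X} {μ : Measure ℝ} [MeasurableSpace X]
    (hm : ∀ x ∈ Ω, AEStronglyMeasurable (fun t => F x t) μ) (s : SimpleFunc ℝ X)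
    (hs : ∀ t, s t ∈ Ω) : AEStronglyMeasurable (fun t => F (s t) t) μ := by
  classical
  have e : (fun t => F (s t) t)
      = fun t => ∑ x ∈ s.range, (s ⁻¹' {x}).indicator (fun t => F x t) t := by
    ext t
    rw [Finset.sum_eq_single (s t)]
    · simp
    · intro x _ hx
      simp [indicator, hx.symm]
    · intro h; exact absurd (SimpleFunc.mem_range_self s t) h
  rw [e]
  refine Finset.aestronglyMeasurable_fun_sum _ fun x hx => ?_
  obtain ⟨t, rfl⟩ := SimpleFunc.mem_range.1 hx
  exact (hm _ (hs t)).indicator (s.measurableSet_preimage _)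

lemma super_meas {F : X → ℝ → Y} {Ω : Set X} {a b : ℝ} (hab : a ≤ b)
    (hm : ∀ x ∈ Ω, AEStronglyMeasurable (fun t => F x t) (volume.restrict (Icc a b)))
    (hc : ∀ᵐ t ∂(volume.restrict (Icc a b)), ContinuousOn (fun x => F x t) Ω)
    {q : ℝ → X} (hq : ContinuousOn q (Icc a b)) (hqΩ : ∀ t ∈ Icc a b, q t ∈ Ω) :
    AEStronglyMeasurable (fun t => F (q t) t) (volume.restrict (Icc a b)) := by
  borelize X
  set p : ℝ → X := IccExtend hab ((Icc a b).domRestrict q) with hp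
  have pc : Continuous p := (continuousOn_iff_continuous_domRestrict.1 hq).Icc_extend'
  have pq : ∀ t ∈ Icc a b, p t = q t := fun t ht => by
    simp [hp, IccExtend_of_mem hab _ ht, Set.domRestrict]
  have pΩ : ∀ t, p t ∈ Ω := fun t => hqΩ _ (projIcc a b hab t).2
  have hpm : Measurable p := pc.measurable
  have : Nonempty Ω := ⟨⟨p a, pΩ a⟩⟩
  let s : ℕ → SimpleFunc ℝ X := fun n => SimpleFunc.approxOn p hpm Ω (p a) (pΩ a) n
  have hsΩ : ∀ n t, s n t ∈ Ω := fun n t => SimpleFunc.approxOn_mem hpm (pΩ a) n t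
  have hst : ∀ t, Tendsto (fun n => s n t) atTop (𝓝 (p t)) := fun t =>
    SimpleFunc.tendsto_approxOn hpm (pΩ a) (subset_closure (pΩ t))
  refine aestronglyMeasurable_of_tendsto_ae atTop (f := fun n t => F (s n t) t)
    (fun n => super_simple hm (s n) (hsΩ n)) ?_
  filter_upwards [hc, ae_restrict_mem measurableSet_Icc] with t h1 h2
  rw [← pq t h2]
  have h3 := h1 (p t) (pΩ t)
  exact h3.tendsto.comp (tendsto_nhdsWithin_iff.2 ⟨hst t, Eventually.of_forall fun n => hsΩ n t⟩)
end car

end Cap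

namespace Cap

structure Hyp (a : ℝ) (If : Set ℝ) {m : ℕ} (Ω : Set (EuclideanSpace ℝ (Fin m)))
    (α : Fin m → ℝ) (qa : EuclideanSpace ℝ (Fin m))
    (F : EuclideanSpace ℝ (Fin m) → ℝ → EuclideanSpace ℝ (Fin m)) : Prop where
  haI : a ∈ If
  hIsub : If ⊆ Set.Ici a
  hIint : (interior If).Nonempty
  hIord : If.OrdConnected
  hα : ∀ i, 0 < α i ∧ α i ≤ 1
  hqa : qa ∈ Ω
  hFmeas : ∀ x ∈ Ω, AEStronglyMeasurable (fun t => F x t) (volume.restrict If)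
  hFcont : ∀ᵐ t ∂(volume.restrict If), ContinuousOn (fun x => F x t) Ω
  hbdd : ∀ K : Set (EuclideanSpace ℝ (Fin m)), K ⊆ Ω → IsCompact K →
      ∀ c ∈ If, ∀ d ∈ If, c ≤ d → ∃ M : ℝ, 0 ≤ M ∧ ∀ x ∈ K,
        ∀ᵐ t ∂(volume.restrict (Set.Icc c d)), ‖F x t‖ ≤ M
  hlip : ∀ x ∈ Ω, ∀ t ∈ If, ∃ R > (0:ℝ), ∃ δ > (0:ℝ), ∃ L : ℝ, 0 ≤ L ∧
      Metric.closedBall x R ⊆ Ω ∧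
      ∀ x₁ ∈ Metric.closedBall x R, ∀ x₂ ∈ Metric.closedBall x R,
        ∀ᵐ τ ∂(volume.restrict (Set.Icc (t - δ) (t + δ) ∩ If)),
          ‖F x₂ τ - F x₁ τ‖ ≤ L * ‖x₂ - x₁‖

structure ISol (a : ℝ) {m : ℕ} (Ω : Set (EuclideanSpace ℝ (Fin m)))
    (α : Fin m → ℝ) (qa : EuclideanSpace ℝ (Fin m))
    (F : EuclideanSpace ℝ (Fin m) → ℝ → EuclideanSpace ℝ (Fin m))
    (q : ℝ → EuclideanSpace ℝ (Fin m)) (b : ℝ) : Prop where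
  cont : ContinuousOn q (Icc a b)
  mem : ∀ t ∈ Icc a b, q t ∈ Ω
  eq : ∀ t ∈ Icc a b, ∀ i, q t i = qa i + rlInt a (α i) (fun τ => F (q τ) τ i) t

lemma intv_Icc {a : ℝ} {I : Set ℝ} (hI : IsIntervalFrom a I) {b : ℝ} (hb : b ∈ I) :
    a ≤ b ∧ Icc a b ⊆ I := ⟨hI.2.1 hb, hI.2.2.2.out hI.1 hb⟩

lemma exists_gt {a : ℝ} {I : Set ℝ} (h1 : I ⊆ Ici a) (h2 : (interior I).Nonempty) :
    ∃ b ∈ I, a < b := by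
  obtain ⟨x, hx⟩ := h2
  have hx' : I ∈ 𝓝 x := mem_interior_iff_mem_nhds.1 hx
  obtain ⟨ε, hε, hb⟩ := Metric.mem_nhds_iff.1 hx'
  refine ⟨x + ε / 2, hb ?_, ?_⟩
  · simp [abs_of_pos hε]; exact hε
  · have : a ≤ x := h1 (mem_of_mem_nhds hx')
    linarith

lemma cont_of_Icc {E : Type*} [TopologicalSpace E] {a : ℝ} {I : Set ℝ} (hI : IsIntervalFrom a I)
    {q : ℝ → E} (h : ∀ b ∈ I, ContinuousOn q (Icc a b)) : ContinuousOn q I := by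
  intro t ht
  by_cases hb : ∃ b ∈ I, t < b
  · obtain ⟨b, hb, htb⟩ := hb
    have h1 := h b hb t ⟨hI.2.1 ht, htb.le⟩
    refine h1.mono_of_mem_nhdsWithin ?_
    filter_upwards [self_mem_nhdsWithin, mem_nhdsWithin_of_mem_nhds (Iio_mem_nhds htb)] with x h2 h3
    exact ⟨hI.2.1 h2, le_of_lt h3⟩
  · push Not at hb
    exact (h t ht t ⟨hI.2.1 ht, le_rfl⟩).mono fun x hx => ⟨hI.2.1 hx, hb x hx⟩

section
variable {a : ℝ} {If : Set ℝ} {m : ℕ} {Ω : Set (EuclideanSpace ℝ (Fin m))}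
    {α : Fin m → ℝ} {qa : EuclideanSpace ℝ (Fin m)}
    {F : EuclideanSpace ℝ (Fin m) → ℝ → EuclideanSpace ℝ (Fin m)}

lemma Hyp.sub (P : Hyp a If Ω α qa F) {b : ℝ} (hb : b ∈ If) : Icc a b ⊆ If :=
  P.hIord.out P.haI hb

lemma Hyp.bm (P : Hyp a If Ω α qa F) {b : ℝ} (hb : b ∈ If)
    {q : ℝ → EuclideanSpace ℝ (Fin m)} (hq : ContinuousOn q (Icc a b))
    (hqΩ : ∀ t ∈ Icc a b, q t ∈ Ω) (i : Fin m) : BM (fun t => F (q t) t i) a b := by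
  have hab : a ≤ b := P.hIsub hb
  have hs := P.sub hb
  have hc := ae_restrict_of_ae_restrict_of_subset hs P.hFcont
  have hm := super_meas hab (fun x hx => (P.hFmeas x hx).mono_set hs) hc hq hqΩ
  have hK : q '' Icc a b ⊆ Ω := by rintro _ ⟨t, ht, rfl⟩; exact hqΩ t ht
  obtain ⟨M, hM, hb⟩ := P.hbdd _ hK (isCompact_Icc.image_of_continuousOn hq) a P.haI b hb hab
  have hu := unif_bdd hK hc hb
  refine ⟨?_, M, hM, ?_⟩
  · exact (EuclideanSpace.proj (𝕜 := ℝ) i).continuous.comp_aestronglyMeasurable hm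
  · filter_upwards [hu, ae_restrict_mem measurableSet_Icc] with t h1 h2
    exact (PiLp.norm_apply_le (F (q t) t) i).trans (h1 _ ⟨t, h2, rfl⟩)

lemma ISol.atStart (P : Hyp a If Ω α qa F) {q : ℝ → EuclideanSpace ℝ (Fin m)} {b : ℝ} (hab : a ≤ b)
    (h : ISol a Ω α qa F q b) : q a = qa := by
  ext i
  rw [h.eq a ⟨le_rfl, hab⟩ i, rl_self a (P.hα i).1, add_zero]

lemma ISol.mono {q : ℝ → EuclideanSpace ℝ (Fin m)} {b c : ℝ} (hcb : c ≤ b)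
    (h : ISol a Ω α qa F q b) : ISol a Ω α qa F q c :=
  ⟨h.cont.mono (Icc_subset_Icc_right hcb), fun t ht => h.mem t ⟨ht.1, ht.2.trans hcb⟩,
    fun t ht => h.eq t ⟨ht.1, ht.2.trans hcb⟩⟩

lemma ISol.congr (P : Hyp a If Ω α qa F) {q p : ℝ → EuclideanSpace ℝ (Fin m)} {b : ℝ}
    (h : ISol a Ω α qa F q b) (e : EqOn q p (Icc a b)) : ISol a Ω α qa F p b := by
  refine ⟨h.cont.congr e.symm, fun t ht => e ht ▸ h.mem t ht, fun t ht i => ?_⟩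
  rw [← e ht, h.eq t ht i]
  congr 1
  apply rl_congr (P.hα i).1 ht.1
  filter_upwards [ae_restrict_mem measurableSet_Icc] with s hs
  rw [e ⟨hs.1, hs.2.trans ht.2⟩]

lemma Hyp.isol (P : Hyp a If Ω α qa F) {q : ℝ → EuclideanSpace ℝ (Fin m)} {I : Set ℝ}
    (S : IsCaputoLocalSol a If Ω α qa F q I) {b : ℝ} (hb : b ∈ I) : ISol a Ω α qa F q b := by
  obtain ⟨hI, hIIf, hc, hm, h0, hS⟩ := S
  suffices H : ∀ b ∈ I, a < b → ISol a Ω α qa F q b by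
    have hab' : a ≤ b := hI.2.1 hb
    rcases hab'.eq_or_lt with rfl | hlt
    · obtain ⟨c, hcI, hac⟩ := exists_gt hI.2.1 hI.2.2.1
      exact (H c hcI hac).mono hac.le
    · exact H b hb hlt
  clear hb b
  intro b hb hab
  have hs := (intv_Icc hI hb).2
  have hcb := hc.mono hs
  refine ⟨hcb, fun t ht => hm t (hs ht), fun t ht i => ?_⟩
  obtain ⟨c, h, hIntg, h1, h2⟩ := hS i
  have B := P.bm (hIIf hb) hcb (fun t ht => hm t (hs ht)) i
  have h1' := ae_restrict_of_ae_restrict_of_subset hs h1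
  have h2' := ae_restrict_of_ae_restrict_of_subset hs h2
  have B' : BM h a b := B.congr (by filter_upwards [h2'] with t ht using ht.symm)
  have := to_integral (u := fun τ => q τ i - qa i) (P.hα i).1 (P.hα i).2 hab
    (by
      have := (EuclideanSpace.proj (𝕜 := ℝ) i).continuous.comp_continuousOn hcb
      exact this.sub continuousOn_const) (by simp [h0]) B' h1' t ht
  rw [← rl_congr (P.hα i).1 ht.1
    (ae_restrict_of_ae_restrict_of_subset (Icc_subset_Icc_right ht.2) h2'), ← this]
  ring

lemma Hyp.sol (P : Hyp a If Ω α qa F) {q : ℝ → EuclideanSpace ℝ (Fin m)} {I : Set ℝ}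
    (hI : IsIntervalFrom a I) (hIIf : I ⊆ If) (H : ∀ b ∈ I, ISol a Ω α qa F q b) :
    IsCaputoLocalSol a If Ω α qa F q I := by
  refine ⟨hI, hIIf, cont_of_Icc hI fun b hb => (H b hb).cont,
    fun t ht => (H t ht).mem t ⟨hI.2.1 ht, le_rfl⟩, (H a hI.1).atStart P le_rfl, fun i => ?_⟩
  have B : ∀ b ∈ I, BM (fun t => F (q t) t i) a b := fun b hb =>
    P.bm (hIIf hb) (H b hb).cont (H b hb).mem i
  refine ⟨0, fun t => F (q t) t i, fun b hb => (B b hb).integrableOn, ?_,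
    Eventually.of_forall fun _ => rfl⟩
  filter_upwards [ae_restrict_mem hI.2.2.2.measurableSet] with t ht
  apply from_integral (P.hα i).1 (P.hα i).2 (hI.2.1 ht) (B t ht)
  intro s hs
  rw [(H t ht).eq s hs i]; ring

end

end Cap

namespace Cap

noncomputable def kap {m : ℕ} (α : Fin m → ℝ) (η : ℝ) : ℝ :=
  ∑ i, η ^ (α i) / (Real.Gamma (α i) * α i)

lemma kap_nonneg {m : ℕ} {α : Fin m → ℝ} (hα : ∀ i, 0 < α i) {η : ℝ} (h : 0 ≤ η) :
    0 ≤ kap α η :=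
  Finset.sum_nonneg fun i _ => div_nonneg (Real.rpow_nonneg h _)
    (mul_nonneg (Real.Gamma_pos_of_pos (hα i)).le (hα i).le)

lemma kap_mono {m : ℕ} {α : Fin m → ℝ} (hα : ∀ i, 0 < α i) {η ζ : ℝ} (h : 0 ≤ η) (h2 : η ≤ ζ) :
    kap α η ≤ kap α ζ := by
  apply Finset.sum_le_sum
  intro i _
  have := Real.Gamma_pos_of_pos (hα i)
  have := hα i
  have := Real.rpow_le_rpow h h2 (hα i).le
  gcongr

lemma kap_small {m : ℕ} {α : Fin m → ℝ} (hα : ∀ i, 0 < α i) (C : ℝ) {ε : ℝ} (hε : 0 < ε) :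
    ∀ᶠ η in 𝓝 (0:ℝ), C * kap α η < ε := by
  have hc : ContinuousAt (fun η => C * kap α η) 0 := by
    unfold kap
    apply ContinuousAt.mul continuousAt_const
    apply tendsto_finsetSum
    intro i _
    apply ContinuousAt.div_const
    exact Real.continuousAt_rpow_const _ _ (Or.inr (hα i).le)
  have h0 : C * kap α 0 = 0 := by
    simp [kap, Real.zero_rpow (hα _).ne']
  apply hc.tendsto.eventually_lt_const
  rwa [h0]

lemma norm_le_sum {m : ℕ} (x : EuclideanSpace ℝ (Fin m)) : ‖x‖ ≤ ∑ i, |x i| := by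
  rw [EuclideanSpace.norm_eq]
  apply Real.sqrt_le_iff.2
  refine ⟨Finset.sum_nonneg fun i _ => abs_nonneg _, ?_⟩
  rw [sq, Finset.sum_mul]
  apply Finset.sum_le_sum
  intro i _
  rw [Real.norm_eq_abs, sq]
  apply mul_le_mul_of_nonneg_left _ (abs_nonneg _)
  exact Finset.single_le_sum (f := fun i => |x i|) (fun i _ => abs_nonneg _) (Finset.mem_univ i)

lemma vec_bound {m : ℕ} {α : Fin m → ℝ} (hα : ∀ i, 0 < α i) {h g : Fin m → ℝ → ℝ} {a T t : ℝ}
    (haT : a ≤ T) (hTt : T ≤ t)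
    (H : ∀ i, BM (h i) a t) (G : ∀ i, BM (g i) a t)
    (e : ∀ i, h i =ᵐ[volume.restrict (Icc a T)] g i) {C : ℝ}
    (hC : ∀ i, ∀ᵐ τ ∂(volume.restrict (Icc T t)), |h i τ - g i τ| ≤ C) :
    ∑ i, |rlInt a (α i) (h i) t - rlInt a (α i) (g i) t| ≤ C * kap α (t - T) := by
  rw [kap, Finset.mul_sum]
  exact Finset.sum_le_sum fun i _ => rl_sub_bound (hα i) haT hTt (H i) (G i) (e i) (hC i)

section
variable {a : ℝ} {If : Set ℝ} {m : ℕ} {Ω : Set (EuclideanSpace ℝ (Fin m))}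
    {α : Fin m → ℝ} {qa : EuclideanSpace ℝ (Fin m)}
    {F : EuclideanSpace ℝ (Fin m) → ℝ → EuclideanSpace ℝ (Fin m)}

lemma Hyp.step (P : Hyp a If Ω α qa F) {q p : ℝ → EuclideanSpace ℝ (Fin m)} {b T y : ℝ}
    (hb : b ∈ If) (hq : ISol a Ω α qa F q b) (hp : ISol a Ω α qa F p b) (hT : T ∈ Ico a b)
    (e : EqOn q p (Icc a T)) (hy : T < y) : ∃ z ∈ Ioc T y, EqOn q p (Icc a z) := by
  have hTm : T ∈ Icc a b := ⟨hT.1, hT.2.le⟩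
  have hα := fun i => (P.hα i).1
  obtain ⟨R, hR, δ, hδ, L, hL, hBΩ, hlip⟩ := P.hlip (q T) (hq.mem T hTm) T (P.sub hb hTm)
  have c1 : ∀ᶠ t in 𝓝[≥] T, q t ∈ Metric.closedBall (q T) R :=
    ((hq.cont T hTm).mono_of_mem_nhdsWithin (by
      filter_upwards [Icc_mem_nhdsGE hT.2] with x hx using ⟨hT.1.trans hx.1, hx.2⟩)).eventually
      (Metric.closedBall_mem_nhds _ hR)
  have c2 : ∀ᶠ t in 𝓝[≥] T, p t ∈ Metric.closedBall (q T) R :=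
    ((hp.cont T hTm).mono_of_mem_nhdsWithin (by
      filter_upwards [Icc_mem_nhdsGE hT.2] with x hx using ⟨hT.1.trans hx.1, hx.2⟩)).eventually
      (by rw [e ⟨hT.1, le_rfl⟩]; exact Metric.closedBall_mem_nhds _ hR)
  have c3 : ∀ᶠ t in 𝓝[≥] T, L * kap α (t - T) < 1 / 2 := by
    have : Tendsto (fun t => t - T) (𝓝[≥] T) (𝓝 0) := by
      have : Tendsto (fun t => t - T) (𝓝 T) (𝓝 (T - T)) := by
        exact (continuous_id.sub continuous_const).tendsto T
      rw [sub_self] at this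
      exact this.mono_left nhdsWithin_le_nhds
    exact this.eventually (kap_small hα L (by norm_num))
  obtain ⟨u, hu, hus⟩ := mem_nhdsGE_iff_exists_Icc_subset.1 (c1.and (c2.and c3))
  have hu' : T < u := hu
  set z := min (min u y) (min b (T + δ)) with hz
  have hTz : T < z := by simp only [hz, lt_min_iff]; exact ⟨⟨hu', hy⟩, hT.2, by linarith⟩
  have hzu : z ≤ u := (min_le_left _ _).trans (min_le_left _ _)
  have hzy : z ≤ y := (min_le_left _ _).trans (min_le_right _ _)
  have hzb : z ≤ b := (min_le_right _ _).trans (min_le_left _ _)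
  have hzδ : z ≤ T + δ := (min_le_right _ _).trans (min_le_right _ _)
  refine ⟨z, ⟨hTz, hzy⟩, ?_⟩
  have hsub : Icc T z ⊆ Icc a b := Icc_subset_Icc hT.1 hzb
  -- maximum of the difference
  have hdc : ContinuousOn (fun t => ‖q t - p t‖) (Icc T z) :=
    ((hq.cont.mono hsub).sub (hp.cont.mono hsub)).norm
  obtain ⟨s, hs, hmax⟩ := isCompact_Icc.exists_isMaxOn ⟨T, le_rfl, hTz.le⟩ hdc
  set D := ‖q s - p s‖ with hD
  have hmax' : ∀ t ∈ Icc T z, ‖q t - p t‖ ≤ D := fun t ht => hmax ht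
  have hcz : ∀ᵐ τ ∂(volume.restrict (Icc T z)), ContinuousOn (fun x => F x τ) Ω :=
    ae_restrict_of_ae_restrict_of_subset (hsub.trans (P.sub hb)) P.hFcont
  have hl : ∀ᵐ τ ∂(volume.restrict (Icc T z)), ∀ x ∈ Metric.closedBall (q T) R,
      ∀ y ∈ Metric.closedBall (q T) R, ‖F y τ - F x τ‖ ≤ L * ‖y - x‖ := by
    apply unif_lip hBΩ hcz
    intro x hx y hy
    refine ae_restrict_of_ae_restrict_of_subset ?_ (hlip x hx y hy)
    intro τ hτ
    exact ⟨⟨by linarith [hτ.1], hτ.2.trans hzδ⟩, P.sub hb (hsub hτ)⟩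
  have hsb : s ∈ Icc a b := hsub hs
  have hsIf : s ∈ If := P.sub hb hsb
  have est : D ≤ (L * D) * kap α (s - T) := by
    have hv := vec_bound hα (h := fun i τ => F (q τ) τ i) (g := fun i τ => F (p τ) τ i) (C := L * D)
      hT.1 hs.1
      (fun i => P.bm hsIf (hq.mono hsb.2).cont (hq.mono hsb.2).mem i)
      (fun i => P.bm hsIf (hp.mono hsb.2).cont (hp.mono hsb.2).mem i)
      (fun i => by
        filter_upwards [ae_restrict_mem measurableSet_Icc] with τ hτ
        rw [e hτ])
      (fun i => by
        filter_upwards [ae_restrict_mem measurableSet_Icc,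
          ae_restrict_of_ae_restrict_of_subset (Icc_subset_Icc_right hs.2) hl] with τ hτ hlτ
        have hτz : τ ∈ Icc T z := ⟨hτ.1, hτ.2.trans hs.2⟩
        have hτu : τ ∈ Icc T u := ⟨hτ.1, hτz.2.trans hzu⟩
        have h1 := hlτ (p τ) (hus hτu).2.1 (q τ) (hus hτu).1
        have h2 := PiLp.norm_apply_le (F (q τ) τ - F (p τ) τ) i
        have h3 := mul_le_mul_of_nonneg_left (hmax' τ hτz) hL
        exact h2.trans (h1.trans h3))
    refine le_trans ?_ hv
    refine (norm_le_sum _).trans (le_of_eq ?_)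
    refine Finset.sum_congr rfl fun i _ => ?_
    rw [PiLp.sub_apply, hq.eq s hsb i, hp.eq s hsb i, add_sub_add_left_eq_sub]
  have hk : L * kap α (s - T) < 1 / 2 := (hus ⟨hs.1, hs.2.trans hzu⟩).2.2
  have hD0 : D = 0 := by
    have : 0 ≤ D := norm_nonneg _
    nlinarith
  intro t ht
  rcases le_total t T with h | h
  · exact e ⟨ht.1, h⟩
  · have := hmax' t ⟨h, ht.2⟩
    rw [hD0] at this
    exact sub_eq_zero.1 (norm_le_zero_iff.1 this)

lemma Hyp.unique (P : Hyp a If Ω α qa F) {q p : ℝ → EuclideanSpace ℝ (Fin m)} {b : ℝ}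
    (hb : b ∈ If) (hq : ISol a Ω α qa F q b) (hp : ISol a Ω α qa F p b) :
    EqOn q p (Icc a b) := by
  have hab : a ≤ b := P.hIsub hb
  set S : Set ℝ := {x | ∀ u ∈ Ico a x, u ≤ b → q u = p u} with hS
  have hcl : IsClosed S := by
    have : S = ⋂ u ∈ {u | a ≤ u ∧ u ≤ b ∧ q u ≠ p u}, Iic u := by
      ext x
      simp only [hS, mem_ofPred_eq, mem_iInter, mem_Iic, mem_Ico]
      constructor
      · rintro h u ⟨h1, h2, h3⟩
        by_contra hlt
        exact h3 (h u ⟨h1, not_le.1 hlt⟩ h2)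
      · intro h u h1 h2
        by_contra h3
        exact absurd (h u ⟨h1.1, h2, h3⟩) (not_le.2 h1.2)
    rw [this]
    exact isClosed_biInter fun u _ => isClosed_Iic
  have haeq : q a = p a := by rw [hq.atStart P hab, hp.atStart P hab]
  -- closing up
  have clos : ∀ x ∈ S ∩ Icc a b, EqOn q p (Icc a x) := by
    rintro x ⟨hx, hxb⟩
    rcases hxb.1.eq_or_lt with rfl | hlt
    · intro t ht
      rw [le_antisymm ht.2 ht.1]; exact haeq
    · have hs : Icc a x ⊆ Icc a b := Icc_subset_Icc_right hxb.2
      have h1 : EqOn q p (Ico a x) := fun t ht => hx t ht (ht.2.le.trans hxb.2)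
      refine h1.of_subset_closure (hq.cont.mono hs) (hp.cont.mono hs) Ico_subset_Icc_self ?_
      rw [closure_Ico hlt.ne]
  have hIcc : Icc a b ⊆ S := by
    apply IsClosed.Icc_subset_of_forall_exists_gt (hcl.inter isClosed_Icc)
    · intro u hu; exact absurd hu.2 (not_lt.2 hu.1)
    · rintro x ⟨hxS, hx⟩ y hy
      obtain ⟨z, hz, ez⟩ := P.step hb hq hp hx (clos x ⟨hxS, hx.1, hx.2.le⟩) hy
      exact ⟨z, fun u hu _ => ez ⟨hu.1, hu.2.le⟩, hz⟩
  exact clos b ⟨hIcc ⟨hab, le_rfl⟩, hab, le_rfl⟩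

end
end Cap

namespace Cap

section
variable {a : ℝ} {If : Set ℝ} {m : ℕ} {Ω : Set (EuclideanSpace ℝ (Fin m))}
    {α : Fin m → ℝ} {qa : EuclideanSpace ℝ (Fin m)}
    {F : EuclideanSpace ℝ (Fin m) → ℝ → EuclideanSpace ℝ (Fin m)}

/-- the Picard operator -/
noncomputable def pic (a : ℝ) {m : ℕ} (α : Fin m → ℝ) (qa : EuclideanSpace ℝ (Fin m))
    (F : EuclideanSpace ℝ (Fin m) → ℝ → EuclideanSpace ℝ (Fin m))
    (q : ℝ → EuclideanSpace ℝ (Fin m)) (t : ℝ) : EuclideanSpace ℝ (Fin m) :=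
  WithLp.toLp 2 fun i => qa i + rlInt a (α i) (fun τ => F (q τ) τ i) t

lemma Hyp.exist (P : Hyp a If Ω α qa F) :
    ∃ b ∈ If, a < b ∧ ∃ q, ISol a Ω α qa F q b := by
  have hα := fun i => (P.hα i).1
  obtain ⟨R, hR, δ, hδ, L, hL, hBΩ, hlip⟩ := P.hlip qa P.hqa a P.haI
  obtain ⟨b₀, hb₀, hab₀⟩ := exists_gt P.hIsub P.hIint
  obtain ⟨M, hM, hbd⟩ := P.hbdd (Metric.closedBall qa R) hBΩ (isCompact_closedBall _ _) a P.haI b₀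
    hb₀ hab₀.le
  have hsm := (kap_small hα M hR).and (kap_small hα L (ε := 1 / 2) (by norm_num))
  obtain ⟨ε, hε, hball⟩ := Metric.eventually_nhds_iff.1 hsm
  set η := min (ε / 2) (min (b₀ - a) δ) with hη
  have hη0 : 0 < η := by
    simp only [hη, lt_min_iff]; exact ⟨by linarith, by linarith, hδ⟩
  have hηε : η ≤ ε / 2 := min_le_left _ _
  have hηb : η ≤ b₀ - a := (min_le_right _ _).trans (min_le_left _ _)
  have hηδ : η ≤ δ := (min_le_right _ _).trans (min_le_right _ _)
  obtain ⟨kM, kL⟩ := hball (y := η) (by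
    rw [Real.dist_eq, sub_zero, abs_of_pos hη0]; linarith)
  set b := a + η with hb
  have hab : a ≤ b := by linarith
  have hbIf : b ∈ If := P.sub hb₀ ⟨hab, by linarith⟩
  have hsubIf := P.sub hbIf
  have hc : ∀ᵐ t ∂(volume.restrict (Icc a b)), ContinuousOn (fun x => F x t) Ω :=
    ae_restrict_of_ae_restrict_of_subset hsubIf P.hFcont
  have ub : ∀ᵐ t ∂(volume.restrict (Icc a b)), ∀ x ∈ Metric.closedBall qa R, ‖F x t‖ ≤ M :=
    unif_bdd hBΩ hc fun x hx => ae_restrict_of_ae_restrict_of_subset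
      (Icc_subset_Icc_right (by linarith)) (hbd x hx)
  have ul : ∀ᵐ t ∂(volume.restrict (Icc a b)), ∀ x ∈ Metric.closedBall qa R,
      ∀ y ∈ Metric.closedBall qa R, ‖F y t - F x t‖ ≤ L * ‖y - x‖ := by
    apply unif_lip hBΩ hc
    intro x hx y hy
    refine ae_restrict_of_ae_restrict_of_subset ?_ (hlip x hx y hy)
    intro τ hτ
    exact ⟨⟨by linarith [hτ.1], by linarith [hτ.2]⟩, hsubIf hτ⟩
  have kmono : ∀ t ∈ Icc a b, kap α (t - a) ≤ kap α η := fun t ht =>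
    kap_mono hα (by linarith [ht.1]) (by linarith [ht.2])
  -- admissible functions
  let Adm : (ℝ → EuclideanSpace ℝ (Fin m)) → Prop := fun q =>
    ContinuousOn q (Icc a b) ∧ ∀ t ∈ Icc a b, q t ∈ Metric.closedBall qa R
  have abm : ∀ q, Adm q → ∀ i, BM (fun τ => F (q τ) τ i) a b := fun q hq i =>
    P.bm hbIf hq.1 (fun t ht => hBΩ (hq.2 t ht)) i
  have padm : ∀ q, Adm q → Adm (pic a α qa F q) := by
    intro q hq
    constructor
    · have : ContinuousOn (fun t => fun i => qa i + rlInt a (α i) (fun τ => F (q τ) τ i) t)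
          (Icc a b) := by
        refine continuousOn_pi.2 fun i => continuousOn_const.add ?_
        exact rl_cont (P.hα i).1 (P.hα i).2 (abm q hq i)
      exact (PiLp.continuous_toLp 2 _).comp_continuousOn this
    · intro t ht
      have hv := vec_bound hα (h := fun i τ => F (q τ) τ i) (g := fun i τ => 0) (C := M)
        (le_refl a) ht.1
        (fun i => (abm q hq i).mono (Icc_subset_Icc_right ht.2))
        (fun i => BM.of_cont continuousOn_const)
        (fun i => by simp [Filter.EventuallyEq])
        (fun i => by
          have hs : Icc a t ⊆ Icc a b := Icc_subset_Icc_right ht.2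
          filter_upwards [ae_restrict_mem measurableSet_Icc,
            ae_restrict_of_ae_restrict_of_subset hs ub] with τ hτ h1
          rw [sub_zero]
          exact (PiLp.norm_apply_le (F (q τ) τ) i).trans (h1 _ (hq.2 τ (hs hτ))))
      rw [mem_closedBall_iff_norm]
      refine (norm_le_sum _).trans ?_
      have h0 : ∀ i, rlInt a (α i) (fun _ => 0) t = 0 := fun i => by
        simp [rlInt]
      have e : ∑ i, |(pic a α qa F q t - qa) i|
          = ∑ i, |rlInt a (α i) (fun τ => F (q τ) τ i) t - rlInt a (α i) (fun _ => 0) t| := by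
        refine Finset.sum_congr rfl fun i _ => ?_
        rw [h0]; simp [pic]
      rw [e]
      refine hv.trans ?_
      have := mul_le_mul_of_nonneg_left (kmono t ht) hM
      linarith
  have pcon : ∀ q p, Adm q → Adm p → ∀ D, (∀ t ∈ Icc a b, ‖q t - p t‖ ≤ D) → 0 ≤ D →
      ∀ t ∈ Icc a b, ‖pic a α qa F q t - pic a α qa F p t‖ ≤ 1 / 2 * D := by
    intro q p hq hp D hD hD0 t ht
    have hv := vec_bound hα (h := fun i τ => F (q τ) τ i) (g := fun i τ => F (p τ) τ i) (C := L * D)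
      (le_refl a) ht.1
      (fun i => (abm q hq i).mono (Icc_subset_Icc_right ht.2))
      (fun i => (abm p hp i).mono (Icc_subset_Icc_right ht.2))
      (fun i => by simp [Filter.EventuallyEq])
      (fun i => by
        have hs : Icc a t ⊆ Icc a b := Icc_subset_Icc_right ht.2
        filter_upwards [ae_restrict_mem measurableSet_Icc,
          ae_restrict_of_ae_restrict_of_subset hs ul] with τ hτ h1
        have h2 := PiLp.norm_apply_le (F (q τ) τ - F (p τ) τ) i
        have h3 := mul_le_mul_of_nonneg_left (hD τ (hs hτ)) hL
        exact h2.trans ((h1 _ (hp.2 τ (hs hτ)) _ (hq.2 τ (hs hτ))).trans h3))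
    refine (norm_le_sum _).trans ?_
    have e : ∑ i, |(pic a α qa F q t - pic a α qa F p t) i|
        = ∑ i, |rlInt a (α i) (fun τ => F (q τ) τ i) t
            - rlInt a (α i) (fun τ => F (p τ) τ i) t| := by
      refine Finset.sum_congr rfl fun i _ => ?_
      simp [pic]
    rw [e]
    refine hv.trans ?_
    have h1 := mul_le_mul_of_nonneg_left (kmono t ht) hL
    nlinarith
  -- the complete metric space
  let S : Set C(Icc a b, EuclideanSpace ℝ (Fin m)) := {p | ∀ t, p t ∈ Metric.closedBall qa R}
  have hScl : IsClosed S := by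
    have : S = ⋂ t, {p | p t ∈ Metric.closedBall qa R} := by ext p; simp [S]
    rw [this]
    exact isClosed_iInter fun t =>
      Metric.isClosed_closedBall.preimage (continuous_eval_const t)
  have : CompleteSpace S := hScl.completeSpace_coe
  have : Nonempty S := ⟨⟨ContinuousMap.const _ qa, fun t => by simp [hR.le]⟩⟩
  let ex : S → ℝ → EuclideanSpace ℝ (Fin m) := fun p => IccExtend hab p.1
  have exv : ∀ (p : S) (t : ℝ) (ht : t ∈ Icc a b), ex p t = p.1 ⟨t, ht⟩ := fun p t ht =>
    IccExtend_of_mem hab _ ht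
  have exa : ∀ p, Adm (ex p) := fun p =>
    ⟨(p.1.continuous.Icc_extend').continuousOn, fun t ht => by rw [exv p t ht]; exact p.2 _⟩
  let Φ : S → S := fun p =>
    ⟨⟨fun t => pic a α qa F (ex p) t, (padm _ (exa p)).1.domRestrict⟩,
      fun t => (padm _ (exa p)).2 t t.2⟩
  have hΦ : ContractingWith (1 / 2) Φ := by
    refine ⟨by
      rw [← NNReal.coe_lt_coe]; norm_num, LipschitzWith.of_dist_le_mul fun p r => ?_⟩
    have hd : dist (Φ p) (Φ r) = dist (Φ p).1 (Φ r).1 := rfl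
    rw [hd, ContinuousMap.dist_le (by positivity)]
    intro t
    have := pcon (ex p) (ex r) (exa p) (exa r) (dist p r) (fun s hs => by
      rw [exv p s hs, exv r s hs, ← dist_eq_norm]
      exact ContinuousMap.dist_apply_le_dist _) dist_nonneg t t.2
    rw [dist_eq_norm]
    have e2 : ((1 / 2 : NNReal) : ℝ) = 1 / 2 := by simp
    rw [e2]
    exact this
  set p := hΦ.fixedPoint Φ with hp
  have hfix : Φ p = p := hΦ.fixedPoint_isFixedPt
  refine ⟨b, hbIf, by linarith, ex p, (exa p).1, fun t ht => hBΩ ((exa p).2 t ht), ?_⟩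
  intro t ht i
  have h1 : ex p t = pic a α qa F (ex p) t := by
    rw [exv p t ht]
    conv_lhs => rw [← hfix]
    rfl
  conv_lhs => rw [h1]
  rfl

lemma Hyp.main (P : Hyp a If Ω α qa F) :
    ∃ (q : ℝ → EuclideanSpace ℝ (Fin m)) (I : Set ℝ),
      IsMaximalSol a If Ω α qa F q I ∧
      (∀ (q' : ℝ → EuclideanSpace ℝ (Fin m)) (I' : Set ℝ),
        IsCaputoLocalSol a If Ω α qa F q' I' → I' ⊆ I ∧ Set.EqOn q q' I') ∧
      ∀ (q₂ : ℝ → EuclideanSpace ℝ (Fin m)) (I₂ : Set ℝ),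
        IsMaximalSol a If Ω α qa F q₂ I₂ → I₂ = I ∧ Set.EqOn q₂ q I := by
  classical
  set I : Set ℝ := {b | b ∈ If ∧ ∃ q, ISol a Ω α qa F q b} with hI
  have hex : ∀ t : ℝ, ∃ x : EuclideanSpace ℝ (Fin m), ∀ q,
      t ∈ If → ISol a Ω α qa F q t → q t = x := by
    intro t
    by_cases h : t ∈ If ∧ ∃ q, ISol a Ω α qa F q t
    · obtain ⟨ht, q, hq⟩ := h
      exact ⟨q t, fun p _ hp => P.unique ht hp hq ⟨P.hIsub ht, le_rfl⟩⟩
    · exact ⟨0, fun q ht hq => absurd ⟨ht, q, hq⟩ h⟩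
  choose Q hQ using hex
  have hQeq : ∀ b ∈ If, ∀ q, ISol a Ω α qa F q b → EqOn q Q (Icc a b) := fun b hb q hq t ht =>
    hQ t q (P.sub hb ht) (hq.mono ht.2)
  have hQS : ∀ b ∈ I, ISol a Ω α qa F Q b := by
    rintro b ⟨hb, q, hq⟩
    exact hq.congr P (hQeq b hb q hq)
  have hdown : ∀ b ∈ I, Icc a b ⊆ I := by
    rintro b ⟨hb, q, hq⟩ t ht
    exact ⟨P.sub hb ht, q, hq.mono ht.2⟩
  obtain ⟨b₁, hb₁, hab₁, q₁, hq₁⟩ := P.exist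
  have hb₁I : b₁ ∈ I := ⟨hb₁, q₁, hq₁⟩
  have hIint : IsIntervalFrom a I := by
    refine ⟨hdown b₁ hb₁I ⟨le_rfl, hab₁.le⟩, fun t ht => P.hIsub ht.1, ?_, ?_⟩
    · have h1 : interior (Icc a b₁) ⊆ interior I := interior_mono (hdown b₁ hb₁I)
      rw [interior_Icc] at h1
      exact (nonempty_Ioo.2 hab₁).mono h1
    · constructor
      intro x hx y hy t ht
      have hax : a ≤ x := P.hIsub hx.1
      exact hdown y hy ⟨hax.trans ht.1, ht.2⟩
  have hsol : IsCaputoLocalSol a If Ω α qa F Q I := P.sol hIint (fun t ht => ht.1) hQS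
  have hgr : ∀ (q' : ℝ → EuclideanSpace ℝ (Fin m)) (I' : Set ℝ),
        IsCaputoLocalSol a If Ω α qa F q' I' → I' ⊆ I ∧ Set.EqOn Q q' I' := by
    intro q' I' h'
    refine ⟨fun t ht => ⟨h'.2.1 ht, q', P.isol h' ht⟩, fun t ht => ?_⟩
    exact (hQ t q' (h'.2.1 ht) (P.isol h' ht)).symm
  refine ⟨Q, I, ⟨hsol, fun q' I' h' hs _ => Subset.antisymm (hgr q' I' h').1 hs⟩, hgr, ?_⟩
  rintro q₂ I₂ ⟨h1, h2⟩
  obtain ⟨g1, g2⟩ := hgr q₂ I₂ h1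
  have := h2 Q I hsol g1 g2
  refine ⟨this.symm, ?_⟩
  rw [this]
  exact g2.symm

end
end Cap

theorem statement7 (a : ℝ) (If : Set ℝ)
    (haI : a ∈ If) (hIsub : If ⊆ Set.Ici a) (hIint : (interior If).Nonempty)
    (hIord : If.OrdConnected)
    (m : ℕ) (hm : 0 < m) (Ω : Set (EuclideanSpace ℝ (Fin m)))
    (hΩopen : IsOpen Ω) (hΩne : Ω.Nonempty)
    (α : Fin m → ℝ) (hα : ∀ i, 0 < α i ∧ α i ≤ 1)
    (qa : EuclideanSpace ℝ (Fin m)) (hqa : qa ∈ Ω)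
    (F : EuclideanSpace ℝ (Fin m) → ℝ → EuclideanSpace ℝ (Fin m))
    -- Carathéodory assumptions
    (hFmeas : ∀ x ∈ Ω, MeasureTheory.AEStronglyMeasurable (fun t => F x t)
      (MeasureTheory.volume.restrict If))
    (hFcont : ∀ᵐ t ∂(MeasureTheory.volume.restrict If), ContinuousOn (fun x => F x t) Ω)
    -- `F` is bounded on compacts
    (hbdd : ∀ K : Set (EuclideanSpace ℝ (Fin m)), K ⊆ Ω → IsCompact K →
      ∀ c ∈ If, ∀ d ∈ If, c ≤ d → ∃ M : ℝ, 0 ≤ M ∧ ∀ x ∈ K,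
        ∀ᵐ t ∂(MeasureTheory.volume.restrict (Set.Icc c d)), ‖F x t‖ ≤ M)
    -- `F` is locally Lipschitz continuous in its first variable
    (hlip : ∀ x ∈ Ω, ∀ t ∈ If, ∃ R > (0:ℝ), ∃ δ > (0:ℝ), ∃ L : ℝ, 0 ≤ L ∧
      Metric.closedBall x R ⊆ Ω ∧
      ∀ x₁ ∈ Metric.closedBall x R, ∀ x₂ ∈ Metric.closedBall x R,
        ∀ᵐ τ ∂(MeasureTheory.volume.restrict (Set.Icc (t - δ) (t + δ) ∩ If)),
          ‖F x₂ τ - F x₁ τ‖ ≤ L * ‖x₂ - x₁‖) :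
    ∃ (q : ℝ → EuclideanSpace ℝ (Fin m)) (I : Set ℝ),
      IsMaximalSol a If Ω α qa F q I ∧
      (∀ (q' : ℝ → EuclideanSpace ℝ (Fin m)) (I' : Set ℝ),
        IsCaputoLocalSol a If Ω α qa F q' I' → I' ⊆ I ∧ Set.EqOn q q' I') ∧
      ∀ (q₂ : ℝ → EuclideanSpace ℝ (Fin m)) (I₂ : Set ℝ),
        IsMaximalSol a If Ω α qa F q₂ I₂ → I₂ = I ∧ Set.EqOn q₂ q I := by
  exact Cap.Hyp.main ⟨haI, hIsub, hIint, hIord, hα, hqa, hFmeas, hFcont, hbdd, hlip⟩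
end
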